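/- Let Ω and Ω' be open bounded convex sets in ℝⁿ with their Hilbert metrics and let τ: Ω → Ω' be an isometry. If Ω contains an extreme line, then τ is (the restriction of) a projective transformation. -/

import Mathlib

/-!
The argument takes place in the cone over a convex domain. For the order defined by a closed convex
cone let `M(x/y) = inf {l | x ≤ l y}`; then `E(x, y) = M(x/y) M(y/x)` is the exponential of the
Hilbert distance of the points represented by `x` and `y` (`hilbertDist_eq`). The claim becomes:
an isometry `T` of two such geometries is induced by a linear isomorphism as soon as the first has
a line whose ends `e₁`, `e₂` are extreme directions (`HCone.HIso.exists_linearEquiv`).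

A line is rigid, i.e. its segments are the only geodesics between their end points, if and only if
the faces generated by its two ends span independent subspaces. So every line with an extreme end
is rigid, and isometries map rigid lines to rigid lines (`HCone.HIso.line_image`). In particular
rays towards `e₁` are mapped to rays, and all the image rays have the same end direction `e₁'`
(`HCone.HIso.focus`): bounded distance shows that the possible end directions generate the same
face, and applying the inverse isometry to the line joining another candidate to `e₂'` gives a line
asymptotic to the original one at both ends, hence equal to it.

Therefore representatives `G₁ x` of `T x` can be chosen, uniquely, so that
`G₁ (x + s e₁) = G₁ x + s e₁'`; likewise `G₂` for `e₂`. Both are positively homogeneous. Their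
ratio is constant along `x + s (e₁ + e₂)`, and a growth estimate as `s → ∞` shows that they are
equal (`HCone.IsLift.unique`). The common lift `G` commutes with translations by `e₁` and `e₂`,
hence extends to the whole vector space, and the extension preserves the infinitesimal seminorm of
the Hilbert metric at each point `p e₁ + q e₂` with `p, q ≥ 1`. The sum of two of these seminorms
is a norm, so the extension is linear by the Mazur–Ulam theorem
(`HCone.Lift.exists_linearEquiv`).
-/

open Set
open scoped LinearAlgebra.Projectivization
open scoped Classical

noncomputable section

abbrev Euc (n : ℕ) := EuclideanSpace ℝ (Fin n)

/-- `α` and `β` are the two points where the straight line through `x` and `y`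
meets the boundary of `Ω`, labeled so that `|α−x| < |α−y|` and `|β−y| < |β−x|`. -/
def IsHilbertPair {n : ℕ} (Ω : Set (Euc n)) (x y α β : Euc n) : Prop :=
  α ∈ frontier Ω ∧ β ∈ frontier Ω ∧
    Collinear ℝ ({α, x, y} : Set (Euc n)) ∧ Collinear ℝ ({β, x, y} : Set (Euc n)) ∧
    dist α x < dist α y ∧ dist β y < dist β x

/-- The Hilbert metric of `Ω`: `d_Ω(x,y) = ln((|α−y|/|α−x|)·(|β−x|/|β−y|))` for `x ≠ y`
(where `α, β` are as in `IsHilbertPair`; for `x ≠ y` in a convex domain `Ω` such a pair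
exists and is unique), and `d_Ω(x,x) = 0` (no such pair exists when `x = y`). -/
def hilbertDist {n : ℕ} (Ω : Set (Euc n)) (x y : Euc n) : ℝ :=
  if h : ∃ p : Euc n × Euc n, IsHilbertPair Ω x y p.1 p.2 then
    Real.log ((dist h.choose.1 y / dist h.choose.1 x) * (dist h.choose.2 x / dist h.choose.2 y))
  else 0

/-- An isometry of Hilbert geometries: a surjective distance preserving map. -/
def IsHilbertIsometry {n : ℕ} (Ω Ω' : Set (Euc n)) (τ : Euc n → Euc n) : Prop :=
  Set.MapsTo τ Ω Ω' ∧ Set.SurjOn τ Ω Ω' ∧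
    ∀ x ∈ Ω, ∀ y ∈ Ω, hilbertDist Ω' (τ x) (τ y) = hilbertDist Ω x y

/-- The standard affine chart `ℝⁿ → ℝPⁿ`, `x ↦ [x : 1]`. -/
def chart {n : ℕ} (x : Euc n) : Projectivization ℝ (Fin (n + 1) → ℝ) :=
  Projectivization.mk ℝ ((Fin.snoc (fun i => x i) 1 : Fin (n + 1) → ℝ))
    (fun h => one_ne_zero (α := ℝ) (by simpa using congrFun h (Fin.last n)))

/-- The projective transformation of `ℝPⁿ` induced by an element of `GL_{n+1}(ℝ)`
(every element of `PGL_{n+1}(ℝ)` arises this way). -/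
def projMap {n : ℕ} (g : (Fin (n + 1) → ℝ) ≃ₗ[ℝ] (Fin (n + 1) → ℝ)) :
    Projectivization ℝ (Fin (n + 1) → ℝ) → Projectivization ℝ (Fin (n + 1) → ℝ) :=
  Projectivization.map (g : (Fin (n + 1) → ℝ) →ₗ[ℝ] (Fin (n + 1) → ℝ)) g.injective

/-- `τ` agrees on `Ω` with (the restriction of) a projective transformation of `ℝPⁿ`. -/
def IsProjectiveOn {n : ℕ} (Ω : Set (Euc n)) (τ : Euc n → Euc n) : Prop :=
  ∃ g : (Fin (n + 1) → ℝ) ≃ₗ[ℝ] (Fin (n + 1) → ℝ),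
    ∀ x ∈ Ω, chart (τ x) = projMap g (chart x)

/-- A ray in `Ω`: the intersection with `Ω` of a Euclidean ray starting at a point of `Ω`. -/
def IsRayIn {n : ℕ} (Ω r : Set (Euc n)) : Prop :=
  ∃ p ∈ Ω, ∃ d : Euc n, d ≠ 0 ∧ r = {x | ∃ t : ℝ, 0 ≤ t ∧ x = p + t • d} ∩ Ω

/-- A line in `Ω`: the nonempty intersection of a straight line with `Ω`. -/
def IsLineIn {n : ℕ} (Ω L : Set (Euc n)) : Prop :=
  L.Nonempty ∧ ∃ p d : Euc n, d ≠ 0 ∧ L = {x | ∃ t : ℝ, x = p + t • d} ∩ Ω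

/-- `a` is an accumulation point of the set `s ⊆ Ω` on the boundary of `Ω`.
For a ray `r` in a convex domain `Ω` there is exactly one such point, denoted `a(r)`. -/
def IsBdryLimit {n : ℕ} (Ω s : Set (Euc n)) (a : Euc n) : Prop :=
  a ∈ frontier Ω ∧ a ∈ closure s

/-- `e` is a focusing point of the isometry `τ : Ω → Ω'`: an extreme point of the closure
of `Ω` such that for any two rays `r₁, r₂` in `Ω` with `a(r₁) = a(r₂) = e` one has
`a(τ(r₁)) = a(τ(r₂))`. -/
def IsFocusingPoint {n : ℕ} (Ω Ω' : Set (Euc n)) (τ : Euc n → Euc n) (e : Euc n) : Prop :=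
  e ∈ Set.extremePoints ℝ (closure Ω) ∧
    ∀ r₁ r₂ : Set (Euc n), IsRayIn Ω r₁ → IsRayIn Ω r₂ →
      IsBdryLimit Ω r₁ e → IsBdryLimit Ω r₂ e →
      ∀ a₁ a₂ : Euc n, IsBdryLimit Ω' (τ '' r₁) a₁ → IsBdryLimit Ω' (τ '' r₂) a₂ → a₁ = a₂

/-- An extreme line in `Ω`: a line in `Ω` whose closure meets `∂Ω` in extreme points
of the closure of `Ω`. -/
def IsExtremeLine {n : ℕ} (Ω L : Set (Euc n)) : Prop :=
  IsLineIn Ω L ∧ ∀ x ∈ closure L ∩ frontier Ω, x ∈ Set.extremePoints ℝ (closure Ω)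

/-- `s` is rigid in `Ω`: for any two points `a, b` of `s` the segment `[a,b]` is the
unique geodesic from `a` to `b` in `(Ω, d_Ω)`, i.e. every point `z` with
`d(a,z) + d(z,b) = d(a,b)` lies on the segment `[a,b]`. -/
def IsRigidSet {n : ℕ} (Ω s : Set (Euc n)) : Prop :=
  ∀ a ∈ s, ∀ b ∈ s, ∀ z ∈ Ω,
    hilbertDist Ω a z + hilbertDist Ω z b = hilbertDist Ω a b → z ∈ segment ℝ a b

/-- A face of a closed convex set `C`: a convex subset `F ⊆ C` such that whenever an open
segment between two points of `C` meets `F`, the whole closed segment lies in `F`. -/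
def IsFace {n : ℕ} (C F : Set (Euc n)) : Prop :=
  Convex ℝ F ∧ IsExtreme ℝ C F

/-- A face of `C` which is neither empty nor all of `C`. -/
def IsProperFace {n : ℕ} (C F : Set (Euc n)) : Prop :=
  IsFace C F ∧ F.Nonempty ∧ F ≠ C

/-- `Ω` is a cone with vertex `v` and base `B`: `B` is an `(n−1)`-dimensional convex
domain lying in a hyperplane not containing `v`, and `Ω` is the union of the open
segments from `v` to the points of `B`. -/
def IsConeWith {n : ℕ} (Ω : Set (Euc n)) (v : Euc n) (B : Set (Euc n)) : Prop :=
  ∃ (f : Euc n →ₗ[ℝ] ℝ) (c : ℝ), f ≠ 0 ∧ (∀ b ∈ B, f b = c) ∧ f v ≠ c ∧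
    B.Nonempty ∧ Convex ℝ B ∧ Bornology.IsBounded B ∧
    B = intrinsicInterior ℝ B ∧
    (affineSpan ℝ B : Set (Euc n)) = {x | f x = c} ∧
    Ω = ⋃ b ∈ B, openSegment ℝ v b

/-- `Ω` is a cone. -/
def IsCone {n : ℕ} (Ω : Set (Euc n)) : Prop :=
  ∃ v B, IsConeWith Ω v B

section HilbertGeometry

open Filter Topology
open scoped Pointwise

/-! ### Cones and the gauge `M` -/

/-- A pointed closed convex cone `P` together with its interior `K`, in a real vector space without
a topology. The fields record what is used: every element of `K` is an order unit
(`unit`), and `P` is closed along lines (`closed`). Two points of `K` on a common ray through the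
origin represent the same point of the associated Hilbert geometry. -/
structure HCone (V : Type*) [AddCommGroup V] [Module ℝ V] where
  K : Set V
  P : Set V
  sub : ∀ {x}, x ∈ K → x ∈ P
  zero_mem : (0 : V) ∈ P
  add_mem : ∀ {x y}, x ∈ P → y ∈ P → x + y ∈ P
  smul_mem : ∀ {c : ℝ} {x}, 0 ≤ c → x ∈ P → c • x ∈ P
  K_smul : ∀ {c : ℝ} {x}, 0 < c → x ∈ K → c • x ∈ K
  K_add : ∀ {x y}, x ∈ K → y ∈ P → x + y ∈ K
  unit : ∀ {x}, x ∈ K → ∀ y, ∃ c : ℝ, 0 < c ∧ c • x + y ∈ K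
  closed : ∀ {x y : V}, (∀ ε : ℝ, 0 < ε → x + ε • y ∈ P) → x ∈ P
  pointed : ∀ {x}, x ∈ P → -x ∈ P → x = 0
  zero_notMem : (0 : V) ∉ K

/-- `x` and `y` are positive multiples of each other: they span the same ray. -/
def Par {V : Type*} [AddCommGroup V] [Module ℝ V] (x y : V) : Prop := ∃ c : ℝ, 0 < c ∧ y = c • x

section Par
variable {V : Type*} [AddCommGroup V] [Module ℝ V] {x y z : V}

lemma Par.refl (x : V) : Par x x := ⟨1, one_pos, (one_smul _ _).symm⟩

lemma Par.symm (h : Par x y) : Par y x := by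
  obtain ⟨c, hc, rfl⟩ := h
  exact ⟨c⁻¹, inv_pos.2 hc, by rw [smul_smul, inv_mul_cancel₀ hc.ne', one_smul]⟩

lemma Par.trans (h : Par x y) (h' : Par y z) : Par x z := by
  obtain ⟨c, hc, rfl⟩ := h
  obtain ⟨d, hd, rfl⟩ := h'
  exact ⟨d * c, mul_pos hd hc, by rw [smul_smul]⟩

lemma Par.smul {c : ℝ} (hc : 0 < c) (x : V) : Par x (c • x) := ⟨c, hc, rfl⟩

end Par

namespace HCone
variable {V : Type*} [AddCommGroup V] [Module ℝ V] (C : HCone V)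

/-- The boundary of the cone (it contains `0`). -/
def B : Set V := {e | e ∈ C.P ∧ e ∉ C.K}

/-- The gauge `M(x/y) = inf {l | x ≤ l y}` for the order defined by the cone. It is finite and
attained (`M_le_iff`) when `y ∈ K`. -/
def M (x y : V) : ℝ := sInf {l : ℝ | l • y - x ∈ C.P}

/-- The product `M(x/y) M(y/x)`, that is, the exponential of the Hilbert distance between the rays
through `x` and `y`. -/
def E (x y : V) : ℝ := C.M x y * C.M y x

variable {C} {x y z e f e₁ e₂ w : V}

lemma mem_of_par (hx : x ∈ C.K) (h : Par x y) : y ∈ C.K := by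
  obtain ⟨c, hc, rfl⟩ := h
  exact C.K_smul hc hx

lemma smul_mem_B {c : ℝ} (hc : 0 < c) (he : e ∈ C.B) : c • e ∈ C.B := by
  refine ⟨C.smul_mem hc.le he.1, fun h => he.2 ?_⟩
  have := C.K_smul (inv_pos.2 hc) h
  rwa [smul_smul, inv_mul_cancel₀ hc.ne', one_smul] at this

lemma nonneg_of_smul_mem {c : ℝ} (hx : x ∈ C.K) (h : c • x ∈ C.P) : 0 ≤ c := by
  by_contra hc
  push Not at hc
  have h1 : (-c) • x ∈ C.K := C.K_smul (by linarith) hx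
  have := C.K_add h1 h
  rw [← add_smul, neg_add_cancel, zero_smul] at this
  exact C.zero_notMem this

lemma M_le_iff (hy : y ∈ C.K) {l : ℝ} : C.M x y ≤ l ↔ l • y - x ∈ C.P := by
  have hbdd : BddBelow {l : ℝ | l • y - x ∈ C.P} := by
    obtain ⟨c, hc, h⟩ := C.unit hy x
    refine ⟨-c, fun l (hl : _ ∈ _) => ?_⟩
    have h2 := C.add_mem hl (C.sub h)
    have h3 : (l + c) • y ∈ C.P := by convert h2 using 1; module
    linarith [nonneg_of_smul_mem hy h3]
  have hne : {l : ℝ | l • y - x ∈ C.P}.Nonempty := by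
    obtain ⟨c, hc, h⟩ := C.unit hy (-x)
    exact ⟨c, by simpa [sub_eq_add_neg] using C.sub h⟩
  constructor
  · intro h
    apply C.closed (y := y)
    intro ε hε
    obtain ⟨r, hr, hr2⟩ := exists_lt_of_csInf_lt hne (show C.M x y < l + ε by linarith)
    have := C.add_mem hr (C.smul_mem (c := l + ε - r) (by linarith) (C.sub hy))
    convert this using 1; module
  · intro h
    exact csInf_le hbdd h

lemma M_spec (hy : y ∈ C.K) : C.M x y • y - x ∈ C.P := (M_le_iff hy).1 le_rfl

lemma exists_sub_mem (hx : x ∈ C.K) (y : V) : ∃ ε : ℝ, 0 < ε ∧ x - ε • y ∈ C.K := by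
  obtain ⟨c, hc, h⟩ := C.unit hx (-y)
  refine ⟨c⁻¹, inv_pos.2 hc, ?_⟩
  have := C.K_smul (inv_pos.2 hc) h
  convert this using 1
  match_scalars <;> field_simp

lemma M_notMem (hy : y ∈ C.K) : C.M x y • y - x ∉ C.K := by
  intro h
  obtain ⟨ε, hε, h2⟩ := exists_sub_mem h y
  have : C.M x y ≤ C.M x y - ε := by
    rw [M_le_iff hy]
    convert C.sub h2 using 1; module
  linarith

lemma M_mem_B (hy : y ∈ C.K) : C.M x y • y - x ∈ C.B := ⟨M_spec hy, M_notMem hy⟩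

lemma M_eq (hy : y ∈ C.K) {l : ℝ} (h : l • y - x ∈ C.B) : C.M x y = l := by
  refine le_antisymm ((M_le_iff hy).2 h.1) ?_
  by_contra hl
  push Not at hl
  apply h.2
  have := C.K_add (C.K_smul (c := l - C.M x y) (by linarith) hy) (M_spec (x := x) hy)
  convert this using 1; module

lemma K_ne_zero (hx : x ∈ C.K) : x ≠ 0 := fun h => C.zero_notMem (h ▸ hx)

lemma M_pos (hx : x ∈ C.P) (hx0 : x ≠ 0) (hy : y ∈ C.K) : 0 < C.M x y := by
  by_contra h
  push Not at h
  rw [M_le_iff hy, zero_smul, zero_sub] at h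
  exact hx0 (C.pointed hx h)

lemma M_posK (hx : x ∈ C.K) (hy : y ∈ C.K) : 0 < C.M x y := M_pos (C.sub hx) (K_ne_zero hx) hy

lemma M_smul {a b : ℝ} (ha : 0 < a) (hb : 0 < b) (hy : y ∈ C.K) :
    C.M (a • x) (b • y) = a / b * C.M x y := by
  apply eq_of_forall_ge_iff
  intro l
  rw [M_le_iff (C.K_smul hb hy), ← le_div_iff₀' (by positivity), M_le_iff hy]
  constructor
  · intro h
    have := C.smul_mem (c := a⁻¹) (by positivity) h
    convert this using 1
    match_scalars <;> field_simp
  · intro h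
    have := C.smul_mem (c := a) (by positivity) h
    convert this using 1
    match_scalars <;> field_simp

lemma M_triangle (hx : x ∈ C.P) (hy : y ∈ C.K) (hz : z ∈ C.K) :
    C.M x z ≤ C.M x y * C.M y z := by
  rw [M_le_iff hz]
  have h0 : 0 ≤ C.M x y := by
    rcases eq_or_ne x 0 with rfl | h
    · apply nonneg_of_smul_mem hy
      simpa using M_spec (C := C) (x := 0) hy
    · exact (M_pos hx h hy).le
  have := C.add_mem (C.smul_mem h0 (M_spec (x := y) hz)) (M_spec (x := x) hy)
  convert this using 1; module

lemma M_self (hx : x ∈ C.K) : C.M x x = 1 := by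
  apply M_eq hx
  rw [one_smul, sub_self]
  exact ⟨C.zero_mem, C.zero_notMem⟩

lemma M_add_self (hy : y ∈ C.K) : C.M (x + y) y = 1 + C.M x y := by
  apply eq_of_forall_ge_iff
  intro l
  rw [M_le_iff hy, ← le_sub_iff_add_le', M_le_iff hy]
  rw [show l • y - (x + y) = (l - 1) • y - x by module]

lemma E_pos (hx : x ∈ C.K) (hy : y ∈ C.K) : 0 < C.E x y := mul_pos (M_posK hx hy) (M_posK hy hx)

lemma E_symm : C.E x y = C.E y x := mul_comm _ _

lemma E_self (hx : x ∈ C.K) : C.E x x = 1 := by rw [E, M_self hx, one_mul]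

lemma E_one_le (hx : x ∈ C.K) (hy : y ∈ C.K) : 1 ≤ C.E x y := by
  have := M_triangle (C.sub hx) hy hx
  rwa [M_self hx] at this

lemma E_triangle (hx : x ∈ C.K) (hy : y ∈ C.K) (hz : z ∈ C.K) :
    C.E x z ≤ C.E x y * C.E y z := by
  have h1 := M_triangle (C.sub hx) hy hz
  have h2 := M_triangle (C.sub hz) hy hx
  have := mul_le_mul h1 h2 (M_posK hz hx).le (mul_pos (M_posK hx hy) (M_posK hy hz)).le
  unfold E
  linarith

lemma E_par {x' y' : V} (hx : x ∈ C.K) (hy : y ∈ C.K) (h : Par x x') (h' : Par y y') :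
    C.E x' y' = C.E x y := by
  obtain ⟨c, hc, rfl⟩ := h
  obtain ⟨d, hd, rfl⟩ := h'
  rw [E, M_smul hc hd hy, M_smul hd hc hx, E]
  field_simp

lemma par_of_E_eq_one (hx : x ∈ C.K) (hy : y ∈ C.K) (h : C.E x y = 1) : Par x y := by
  have hp := M_posK hx hy
  refine Par.symm ⟨C.M x y, hp, ?_⟩
  have h1 := M_spec (x := x) hy
  have h2 := C.smul_mem hp.le (M_spec (x := y) hx)
  rw [smul_sub, smul_smul] at h2
  change C.E x y • x - _ ∈ _ at h2
  rw [h, one_smul] at h2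
  have := C.pointed h1 (by rwa [neg_sub])
  exact (sub_eq_zero.1 this).symm

lemma E_eq_one_of_par (hx : x ∈ C.K) (h : Par x y) : C.E x y = 1 := by
  rw [E_par hx hx (Par.refl x) h, E_self hx]

/-! ### Lines -/

/-- `e₁` and `e₂` are the end directions of a line of the Hilbert geometry, whose points are the
`a • e₁ + b • e₂` with `a, b > 0`. -/
structure Line (C : HCone V) (e₁ e₂ : V) : Prop where
  left : e₁ ∈ C.B
  right : e₂ ∈ C.B
  add : e₁ + e₂ ∈ C.K

lemma Line.symm (h : C.Line e₁ e₂) : C.Line e₂ e₁ := ⟨h.right, h.left, add_comm e₁ e₂ ▸ h.add⟩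

lemma Line.left_nonneg (h : C.Line e₁ e₂) {p q : ℝ} (hpq : p • e₁ + q • e₂ ∈ C.P) : 0 ≤ p := by
  by_contra hp
  push Not at hp
  have h1 : (q - p) • e₂ ∈ C.K := by
    have := C.K_add (C.K_smul (c := -p) (by linarith) h.add) hpq
    convert this using 1; module
  rcases lt_or_ge 0 (q - p) with hq | hq
  · exact (smul_mem_B hq h.right).2 h1
  · have := C.K_add h1 (C.smul_mem (c := p - q) (by linarith) h.right.1)
    rw [← add_smul] at this
    apply C.zero_notMem
    convert this using 1; module

lemma Line.right_nonneg (h : C.Line e₁ e₂) {p q : ℝ} (hpq : p • e₁ + q • e₂ ∈ C.P) : 0 ≤ q :=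
  h.symm.left_nonneg (by rwa [add_comm])

lemma Line.mem (h : C.Line e₁ e₂) {p q : ℝ} (hp : 0 < p) (hq : 0 < q) :
    p • e₁ + q • e₂ ∈ C.K := by
  rcases le_total p q with hpq | hpq
  · have := C.K_add (C.K_smul hp h.add) (C.smul_mem (c := q - p) (by linarith) h.right.1)
    convert this using 1; module
  · have := C.K_add (C.K_smul hq h.add) (C.smul_mem (c := p - q) (by linarith) h.left.1)
    convert this using 1; module

lemma Line.left_pos (h : C.Line e₁ e₂) {p q : ℝ} (hpq : p • e₁ + q • e₂ ∈ C.K) : 0 < p := by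
  rcases (h.left_nonneg (C.sub hpq)).lt_or_eq with h1 | rfl
  · exact h1
  · rw [zero_smul, zero_add] at hpq
    have hq : 0 ≤ q := h.right_nonneg (p := 0) (by simpa using C.sub hpq)
    rcases hq.lt_or_eq with hq | rfl
    · exact absurd hpq (smul_mem_B hq h.right).2
    · rw [zero_smul] at hpq
      exact absurd hpq C.zero_notMem

lemma Line.right_pos (h : C.Line e₁ e₂) {p q : ℝ} (hpq : p • e₁ + q • e₂ ∈ C.K) : 0 < q :=
  h.symm.left_pos (by rwa [add_comm])

lemma Line.indep (h : C.Line e₁ e₂) {p q : ℝ} (hpq : p • e₁ + q • e₂ = 0) : p = 0 ∧ q = 0 := by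
  have h0 : p • e₁ + q • e₂ ∈ C.P := hpq ▸ C.zero_mem
  have h1 : (-p) • e₁ + (-q) • e₂ ∈ C.P := by
    rw [show (-p) • e₁ + (-q) • e₂ = -(p • e₁ + q • e₂) by module, hpq, neg_zero]
    exact C.zero_mem
  have a := h.left_nonneg h0
  have b := h.right_nonneg h0
  have c := h.left_nonneg h1
  have d := h.right_nonneg h1
  constructor <;> linarith

lemma Line.left_ne_zero (h : C.Line e₁ e₂) : e₁ ≠ 0 := fun h0 =>
  one_ne_zero (h.indep (p := 1) (q := 0) (by simp [h0])).1

lemma Line.right_ne_zero (h : C.Line e₁ e₂) : e₂ ≠ 0 := h.symm.left_ne_zero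

lemma Line.M_eq (h : C.Line e₁ e₂) (a b : ℝ) {c d : ℝ} (hc : 0 < c) (hd : 0 < d) :
    C.M (a • e₁ + b • e₂) (c • e₁ + d • e₂) = max (a / c) (b / d) := by
  apply eq_of_forall_ge_iff
  intro l
  rw [M_le_iff (h.mem hc hd), max_le_iff, div_le_iff₀ hc, div_le_iff₀ hd,
    show l • (c • e₁ + d • e₂) - (a • e₁ + b • e₂) = (l * c - a) • e₁ + (l * d - b) • e₂ by module]
  constructor
  · intro hl
    exact ⟨by linarith [h.left_nonneg hl], by linarith [h.right_nonneg hl]⟩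
  · rintro ⟨h1, h2⟩
    exact C.add_mem (C.smul_mem (by linarith) h.left.1) (C.smul_mem (by linarith) h.right.1)

lemma Line.E_of_le (h : C.Line e₁ e₂) {a b c d : ℝ} (ha : 0 < a) (hb : 0 < b) (hc : 0 < c)
    (hd : 0 < d) (hle : a / b ≤ c / d) :
    C.E (a • e₁ + b • e₂) (c • e₁ + d • e₂) = (c / d) / (a / b) := by
  rw [div_le_div_iff₀ hb hd] at hle
  rw [E, h.M_eq _ _ hc hd, h.M_eq _ _ ha hb, max_eq_right, max_eq_left]
  · field_simp
  · rw [div_le_div_iff₀ hb ha]; linarith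
  · rw [div_le_div_iff₀ hc hd]; linarith

lemma Line.E_eq (h : C.Line e₁ e₂) {a b c d : ℝ} (ha : 0 < a) (hb : 0 < b) (hc : 0 < c)
    (hd : 0 < d) : C.E (a • e₁ + b • e₂) (c • e₁ + d • e₂) =
      Real.exp |Real.log (a / b) - Real.log (c / d)| := by
  have h1 : 0 < a / b := by positivity
  have h2 : 0 < c / d := by positivity
  rcases le_total (a / b) (c / d) with hle | hle
  · rw [h.E_of_le ha hb hc hd hle, abs_of_nonpos (by linarith [Real.log_le_log h1 hle]), neg_sub,
      ← Real.log_div h2.ne' h1.ne', Real.exp_log (by positivity)]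
  · rw [E_symm, h.E_of_le hc hd ha hb hle, abs_of_nonneg (by linarith [Real.log_le_log h2 hle]),
      ← Real.log_div h1.ne' h2.ne', Real.exp_log (by positivity)]

/-- Two points at positive distance lie on a line, normalized so that `x = e₁ + e₂` and `y` is
represented by `r • e₁ + e₂`. -/
lemma exists_line (hx : x ∈ C.K) (hy : y ∈ C.K) {r : ℝ} (hr : 1 < r) (h : C.E x y = r) :
    ∃ e₁ e₂, C.Line e₁ e₂ ∧ e₁ + e₂ = x ∧ Par y (r • e₁ + e₂) := by
  have hl := M_posK hx hy
  have h1 := M_mem_B (C := C) (x := x) hy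
  have h2 := M_mem_B (C := C) (x := y) hx
  have hlm : C.M x y * C.M y x = r := h
  set l := C.M x y
  set m := C.M y x
  have hr0 : r - 1 ≠ 0 := by linarith
  have hr1 : 0 < r - 1 := by linarith
  have hs : (r - 1)⁻¹ • (l • y - x) + (l / (r - 1)) • (m • x - y) = x := by
    subst hlm
    match_scalars <;> field_simp <;> ring
  refine ⟨(r - 1)⁻¹ • (l • y - x), (l / (r - 1)) • (m • x - y),
    ⟨smul_mem_B (by positivity) h1, smul_mem_B (by positivity) h2, hs.symm ▸ hx⟩, hs, l, hl, ?_⟩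
  subst hlm
  match_scalars <;> field_simp <;> ring

/-! ### Faces and rigid lines -/

/-- `w` is dominated by `e`, i.e. `-c e ≤ w ≤ c e` for some `c`: it lies in the linear span of the
smallest face of `P` containing `e`. -/
def Dom (C : HCone V) (e w : V) : Prop := ∃ c : ℝ, 0 ≤ c ∧ c • e + w ∈ C.P ∧ c • e - w ∈ C.P

lemma Dom.add (h : C.Dom e x) (h' : C.Dom e y) : C.Dom e (x + y) := by
  obtain ⟨c, hc, h1, h2⟩ := h
  obtain ⟨d, hd, h3, h4⟩ := h'
  refine ⟨c + d, by positivity, ?_, ?_⟩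
  · convert C.add_mem h1 h3 using 1; module
  · convert C.add_mem h2 h4 using 1; module

lemma Dom.neg (h : C.Dom e x) : C.Dom e (-x) := by
  obtain ⟨c, hc, h1, h2⟩ := h
  exact ⟨c, hc, by rwa [← sub_eq_add_neg], by rwa [sub_neg_eq_add]⟩

lemma Dom.smul (h : C.Dom e x) (r : ℝ) : C.Dom e (r • x) := by
  have key : ∀ r : ℝ, 0 ≤ r → C.Dom e (r • x) := by
    intro r hr
    obtain ⟨c, hc, h1, h2⟩ := h
    refine ⟨r * c, by positivity, ?_, ?_⟩
    · convert C.smul_mem hr h1 using 1; module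
    · convert C.smul_mem hr h2 using 1; module
  rcases le_total 0 r with hr | hr
  · exact key r hr
  · have := (key (-r) (by linarith)).neg
    rwa [neg_smul, neg_neg] at this

lemma Dom.of_le {c : ℝ} (he : e ∈ C.P) (hc : 0 ≤ c) (hx : x ∈ C.P) (h : c • e - x ∈ C.P) :
    C.Dom e x := ⟨c, hc, C.add_mem (C.smul_mem hc he) hx, h⟩

lemma Dom.self (he : e ∈ C.P) : C.Dom e e :=
  Dom.of_le he zero_le_one he (by rw [one_smul, sub_self]; exact C.zero_mem)

lemma Dom.trans (h : C.Dom e f) (h' : C.Dom f w) : C.Dom e w := by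
  obtain ⟨c, hc, h1, h2⟩ := h
  obtain ⟨d, hd, h3, h4⟩ := h'
  refine ⟨d * c, by positivity, ?_, ?_⟩
  · convert C.add_mem (C.smul_mem hd h2) h3 using 1; module
  · convert C.add_mem (C.smul_mem hd h2) h4 using 1; module

/-- The spans of the faces generated by `e₁` and `e₂` meet only in `0`. -/
def Disj (C : HCone V) (e₁ e₂ : V) : Prop := ∀ w, C.Dom e₁ w → C.Dom e₂ w → w = 0

lemma Disj.symm (h : C.Disj e₁ e₂) : C.Disj e₂ e₁ := fun w h1 h2 => h w h2 h1

/-- The line from `e₁` to `e₂` is rigid: every point `z` realizing equality in the triangle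
inequality between two of its points lies in its span. -/
def Rig (C : HCone V) (e₁ e₂ : V) : Prop :=
  ∀ a b c d : ℝ, 0 < a → 0 < b → 0 < c → 0 < d → ∀ z ∈ C.K,
    C.E (a • e₁ + b • e₂) z * C.E z (c • e₁ + d • e₂) = C.E (a • e₁ + b • e₂) (c • e₁ + d • e₂) →
    ∃ p q : ℝ, z = p • e₁ + q • e₂

/-- A line is rigid when the faces at its ends span independent subspaces: equality in the
triangle inequality forces equality for both factors `M` of `E`, which puts a vector of the span
of `x, y, z` in both face spans. -/
lemma Line.rig_of_disj (h : C.Line e₁ e₂) (hd : C.Disj e₁ e₂) : C.Rig e₁ e₂ := by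
  have key : ∀ e₁ e₂ : V, C.Line e₁ e₂ → C.Disj e₁ e₂ →
      ∀ a b c d : ℝ, 0 < a → 0 < b → 0 < c → 0 < d → c / d ≤ a / b → ∀ z ∈ C.K,
      C.E (a • e₁ + b • e₂) z * C.E z (c • e₁ + d • e₂) =
        C.E (a • e₁ + b • e₂) (c • e₁ + d • e₂) →
      ∃ p q : ℝ, z = p • e₁ + q • e₂ := by
    intro e₁ e₂ h hdis a b c d ha hb hc hd hle z hz hE
    rw [div_le_div_iff₀ hd hb] at hle
    have hx := h.mem ha hb
    have hy := h.mem hc hd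
    have m1 : C.M (a • e₁ + b • e₂) (c • e₁ + d • e₂) = a / c := by
      rw [h.M_eq _ _ hc hd, max_eq_left]
      rw [div_le_div_iff₀ hd hc]; linarith
    have m2 : C.M (c • e₁ + d • e₂) (a • e₁ + b • e₂) = d / b := by
      rw [h.M_eq _ _ ha hb, max_eq_right]
      rw [div_le_div_iff₀ ha hb]; linarith
    set x := a • e₁ + b • e₂ with hxdef
    set y := c • e₁ + d • e₂ with hydef
    have t1 := M_triangle (C.sub hx) hz hy
    have t2 := M_triangle (C.sub hy) hz hx
    have pα := M_posK hx hz
    have pβ := M_posK hz hy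
    have pα' := M_posK hy hz
    have pβ' := M_posK hz hx
    have k1 := M_spec (C := C) (x := x) hz
    have k2 := M_spec (C := C) (x := z) hy
    have k3 := M_spec (C := C) (x := y) hz
    have k4 := M_spec (C := C) (x := z) hx
    have pxy := M_posK hx hy
    have pyx := M_posK hy hx
    unfold E at hE
    rw [m1] at t1 hE pxy
    rw [m2] at t2 hE pyx
    set α := C.M x z
    set β := C.M z y
    set α' := C.M y z
    set β' := C.M z x
    have q1 : α * β = a / c := by
      by_contra hne
      have hlt := lt_of_le_of_ne t1 (Ne.symm hne)
      have := mul_lt_mul hlt t2 pyx (by positivity)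
      nlinarith
    have q2 : α' * β' = d / b := by
      by_contra hne
      have hlt := lt_of_le_of_ne t2 (Ne.symm hne)
      have := mul_lt_mul' t1 hlt pyx.le (by positivity)
      nlinarith
    -- the boundary directions `α • z - x` and `α' • z - y` lie in the faces of `e₂` and `e₁`
    have b2 : C.Dom e₂ (α • z - x) := by
      refine Dom.of_le (c := a / c * d - b) h.right.1 ?_ k1 ?_
      · rw [sub_nonneg, div_mul_eq_mul_div, le_div_iff₀ hc]; linarith
      · have := C.smul_mem pα.le k2
        convert this using 1
        rw [smul_sub, smul_smul, q1, hxdef, hydef]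
        match_scalars <;> field_simp <;> ring
    have b1 : C.Dom e₁ (α' • z - y) := by
      refine Dom.of_le (c := d / b * a - c) h.left.1 ?_ k3 ?_
      · rw [sub_nonneg, div_mul_eq_mul_div, le_div_iff₀ hb]; linarith
      · have := C.smul_mem pα'.le k4
        convert this using 1
        rw [smul_sub, smul_smul, q2, hxdef, hydef]
        match_scalars <;> field_simp <;> ring
    have hw := hdis (α' • (α • z - x) + (α' * b - α * d) • e₂)
      (by
        have := (b1.smul α).add ((Dom.self h.left.1).smul (α * c - α' * a))
        convert this using 1
        rw [hxdef, hydef]; module)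
      ((b2.smul α').add ((Dom.self h.right.1).smul _))
    refine ⟨a / α, b / α - (α' * b - α * d) / (α' * α), ?_⟩
    have hz2 : (α' * α) • z = (α' * a) • e₁ + (α' * b - (α' * b - α * d)) • e₂ := by
      rw [← sub_eq_zero, ← hw, hxdef]; module
    have hne : α' * α ≠ 0 := by positivity
    have := congrArg (fun v => (α' * α)⁻¹ • v) hz2
    simp only [smul_smul, inv_mul_cancel₀ hne, one_smul] at this
    rw [this]
    match_scalars <;> field_simp
  intro a b c d ha hb hc hd' z hz hE
  rcases le_total (c / d) (a / b) with hle | hle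
  · exact key e₁ e₂ h hd a b c d ha hb hc hd' hle z hz hE
  · have hle2 : d / c ≤ b / a := by
      rw [div_le_div_iff₀ hb hd'] at hle
      rw [div_le_div_iff₀ hc ha]; linarith
    rw [add_comm (a • e₁), add_comm (c • e₁)] at hE
    obtain ⟨p, q, hpq⟩ := key e₂ e₁ h.symm hd.symm b a d c hb ha hd' hc hle2 z hz hE
    exact ⟨q, p, by rw [hpq, add_comm]⟩

lemma Line.disj_of_span (h : C.Line e₁ e₂) {p q : ℝ} (h1 : C.Dom e₁ (p • e₁ + q • e₂)) : q = 0 := by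
  obtain ⟨c, hc, a1, a2⟩ := h1
  have := h.right_nonneg (p := c + p) (q := q) (by convert a1 using 1; module)
  have := h.right_nonneg (p := c - p) (q := -q) (by convert a2 using 1; module)
  linarith

/-- The converse of `Line.rig_of_disj`: if `w ≠ 0` lay in both spans, then `e₁ + e₂ + δ • w` would
be a point between `e₁ + 2 • e₂` and `2 • e₁ + e₂` off the line. -/
lemma Line.disj_of_rig (h : C.Line e₁ e₂) (hr : C.Rig e₁ e₂) : C.Disj e₁ e₂ := by
  intro w h1 h2
  have key : ∀ e, e ∈ C.P → C.Dom e w → ∃ δ : ℝ, 0 < δ ∧ ∀ t : ℝ, |t| ≤ δ → e + t • w ∈ C.P := by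
    rintro e he ⟨c, hc, a1, a2⟩
    refine ⟨1 / (c + 1), by positivity, fun t ht => ?_⟩
    have hct : |t| * c ≤ 1 := by
      have : |t| * (c + 1) ≤ 1 := by rwa [le_div_iff₀ (by positivity)] at ht
      nlinarith [abs_nonneg t]
    rcases le_total 0 t with h0 | h0
    · rw [abs_of_nonneg h0] at hct
      have := C.add_mem (C.smul_mem h0 a1) (C.smul_mem (c := 1 - t * c) (by linarith) he)
      convert this using 1; module
    · rw [abs_of_nonpos h0] at hct
      have := C.add_mem (C.smul_mem (c := -t) (by linarith) a2)
        (C.smul_mem (c := 1 - -t * c) (by linarith) he)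
      convert this using 1; module
  obtain ⟨δ₁, hδ₁, g1⟩ := key e₁ h.left.1 h1
  obtain ⟨δ₂, hδ₂, g2⟩ := key e₂ h.right.1 h2
  obtain ⟨δ, hδ, hle1, hle2⟩ : ∃ δ : ℝ, 0 < δ ∧ 2 * δ ≤ δ₁ ∧ 2 * δ ≤ δ₂ :=
    ⟨min δ₁ δ₂ / 2, by positivity, by linarith [min_le_left δ₁ δ₂], by linarith [min_le_right δ₁ δ₂]⟩
  have a1 := g1 (2 * δ) (by rw [abs_of_pos (by positivity)]; exact hle1)
  have a2 := g1 (-δ) (by rw [abs_neg, abs_of_pos hδ]; linarith)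
  have b1 := g2 (2 * δ) (by rw [abs_of_pos (by positivity)]; exact hle2)
  have b2 := g2 (-δ) (by rw [abs_neg, abs_of_pos hδ]; linarith)
  have hx : (1 : ℝ) • e₁ + (2 : ℝ) • e₂ ∈ C.K := h.mem (by norm_num) (by norm_num)
  have hy : (2 : ℝ) • e₁ + (1 : ℝ) • e₂ ∈ C.K := h.mem (by norm_num) (by norm_num)
  have hz : e₁ + e₂ + δ • w ∈ C.K := by
    have := C.K_smul (c := 1 / 2) (by norm_num) (C.K_add hx a1)
    convert this using 1; module
  have m1 : C.M ((1 : ℝ) • e₁ + (2 : ℝ) • e₂) (e₁ + e₂ + δ • w) ≤ 2 := by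
    rw [M_le_iff hz]; convert a1 using 1; module
  have m2 : C.M (e₁ + e₂ + δ • w) ((2 : ℝ) • e₁ + (1 : ℝ) • e₂) ≤ 1 := by
    rw [M_le_iff hy]; convert a2 using 1; module
  have m3 : C.M ((2 : ℝ) • e₁ + (1 : ℝ) • e₂) (e₁ + e₂ + δ • w) ≤ 2 := by
    rw [M_le_iff hz]; convert b1 using 1; module
  have m4 : C.M (e₁ + e₂ + δ • w) ((1 : ℝ) • e₁ + (2 : ℝ) • e₂) ≤ 1 := by
    rw [M_le_iff hx]; convert b2 using 1; module
  have hE : C.E ((1 : ℝ) • e₁ + (2 : ℝ) • e₂) ((2 : ℝ) • e₁ + (1 : ℝ) • e₂) = 4 := by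
    rw [h.E_of_le (by norm_num) (by norm_num) (by norm_num) (by norm_num) (by norm_num)]; norm_num
  have hE2 : C.E ((1 : ℝ) • e₁ + (2 : ℝ) • e₂) (e₁ + e₂ + δ • w) ≤ 2 * 1 :=
    mul_le_mul m1 m4 (M_posK hz hx).le (by norm_num)
  have hE3 : C.E (e₁ + e₂ + δ • w) ((2 : ℝ) • e₁ + (1 : ℝ) • e₂) ≤ 1 * 2 :=
    mul_le_mul m2 m3 (M_posK hy hz).le (by norm_num)
  obtain ⟨p, q, hpq⟩ := hr 1 2 2 1 (by norm_num) (by norm_num) (by norm_num) (by norm_num) _ hz (by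
    refine le_antisymm ?_ (E_triangle hx hz hy)
    rw [hE]
    calc _ ≤ (2 * 1 : ℝ) * (1 * 2) := mul_le_mul hE2 hE3 (E_pos hz hy).le (by norm_num)
      _ = 4 := by norm_num)
  have hw : w = ((p - 1) / δ) • e₁ + ((q - 1) / δ) • e₂ := by
    have h3 : δ • w = (p - 1) • e₁ + (q - 1) • e₂ := by
      rw [← add_right_inj (e₁ + e₂), hpq]; module
    rw [← inv_smul_smul₀ hδ.ne' w, h3]
    match_scalars <;> field_simp
  have hq := h.disj_of_span (hw ▸ h1)
  have hp := h.symm.disj_of_span (by rw [add_comm]; exact hw ▸ h2)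
  rw [hw, hq, hp]; simp

/-- `e` spans an extreme ray of `P` (or `e = 0`). -/
def Extr (C : HCone V) (e : V) : Prop := ∀ a b, a ∈ C.P → b ∈ C.P → a + b = e → ∃ s : ℝ, a = s • e

lemma Extr.of_dom (he : C.Extr e) (h : C.Dom e w) : ∃ s : ℝ, w = s • e := by
  obtain ⟨c, hc, h1, h2⟩ := h
  rcases hc.lt_or_eq with hc | rfl
  · obtain ⟨s, hs⟩ := he ((1 / (2 * c)) • (c • e + w)) ((1 / (2 * c)) • (c • e - w))
      (C.smul_mem (by positivity) h1) (C.smul_mem (by positivity) h2)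
      (by match_scalars <;> field_simp <;> ring)
    refine ⟨2 * c * s - c, ?_⟩
    have := congrArg (fun v => (2 * c) • v) hs
    simp only [smul_smul] at this
    rw [mul_one_div_cancel (by positivity), one_smul] at this
    rw [sub_smul, ← this]; abel
  · refine ⟨0, ?_⟩
    rw [zero_smul] at *
    exact C.pointed (by simpa using h1) (by simpa using h2)

lemma Line.disj_of_extr (h : C.Line e₁ e₂) (he : C.Extr e₁) : C.Disj e₁ e₂ := by
  intro w h1 h2
  obtain ⟨s, rfl⟩ := he.of_dom h1
  have : s = 0 := h.symm.disj_of_span (p := 0) (by simpa using h2)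
  rw [this, zero_smul]

end HCone

/-! ### Isometries, images of lines and focusing -/

namespace HCone

variable {V V' : Type*} [AddCommGroup V'] [Module ℝ V'] [AddCommGroup V] [Module ℝ V]

/-- `T` induces a surjective isometry of the Hilbert geometries of two cones. It is a map on vectors,
but only the rays `T x` matter, so surjectivity is up to positive multiples. -/
structure HIso (C : HCone V) (C' : HCone V') (T : V → V') : Prop where
  maps : ∀ x ∈ C.K, T x ∈ C'.K
  iso : ∀ x ∈ C.K, ∀ y ∈ C.K, C'.E (T x) (T y) = C.E x y
  surj : ∀ y ∈ C'.K, ∃ x ∈ C.K, Par (T x) y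

variable {C : HCone V} {C' : HCone V'} {T : V → V'} {x y z e e₁ e₂ : V} {e' e₁' e₂' : V'}

lemma HIso.par (hT : HIso C C' T) (hx : x ∈ C.K) (hxy : Par x y) : Par (T x) (T y) := by
  have hy := mem_of_par hx hxy
  apply par_of_E_eq_one (hT.maps x hx) (hT.maps y hy)
  rw [hT.iso x hx y hy, E_eq_one_of_par hx hxy]

lemma HIso.par_of (hT : HIso C C' T) (hx : x ∈ C.K) (hy : y ∈ C.K) (h : Par (T x) (T y)) :
    Par x y := by
  apply par_of_E_eq_one hx hy
  rw [← hT.iso x hx y hy, E_eq_one_of_par (hT.maps x hx) h]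

lemma HIso.exists_inv (hT : HIso C C' T) :
    ∃ S : V' → V, HIso C' C S ∧ ∀ y ∈ C'.K, Par (T (S y)) y := by
  choose! S hS hS' using hT.surj
  refine ⟨S, ⟨hS, ?_, ?_⟩, hS'⟩
  · intro x hx y hy
    rw [← hT.iso _ (hS x hx) _ (hS y hy)]
    exact (E_par (hT.maps _ (hS x hx)) (hT.maps _ (hS y hy)) (hS' x hx) (hS' y hy)).symm
  · intro x hx
    exact ⟨T x, hT.maps x hx, hT.par_of (hS _ (hT.maps x hx)) hx (hS' _ (hT.maps x hx))⟩

/-- A point between two others on a rigid line has image in the span of their images. By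
surjectivity, the point of the image segment at the right distances has a preimage, which rigidity
identifies. -/
lemma HIso.mid (hT : HIso C C' T) (h : C.Line e₁ e₂) (hr : C.Rig e₁ e₂) {r t s : ℝ} (hr0 : 0 < r)
    (hrt : r < t) (hts : t < s) : ∃ a b : ℝ, a ≠ 0 ∧ b ≠ 0 ∧
      T (t • e₁ + (1 : ℝ) • e₂) =
        a • T (r • e₁ + (1 : ℝ) • e₂) + b • T (s • e₁ + (1 : ℝ) • e₂) := by
  have ht0 : 0 < t := by linarith
  have hs0 : 0 < s := by linarith
  have hp : ∀ r : ℝ, 0 < r → r • e₁ + (1 : ℝ) • e₂ ∈ C.K := fun r hr => h.mem hr one_pos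
  have hE : ∀ r s : ℝ, 0 < r → r ≤ s →
      C.E (r • e₁ + (1 : ℝ) • e₂) (s • e₁ + (1 : ℝ) • e₂) = s / r := by
    intro r s hr hrs
    rw [h.E_of_le hr one_pos (by linarith) one_pos (by simpa using hrs), div_one, div_one]
  have hsr : 1 < s / r := by rw [lt_div_iff₀ hr0]; linarith
  obtain ⟨f₁, f₂, hf, hsum, hpar⟩ := exists_line (hT.maps _ (hp r hr0)) (hT.maps _ (hp s hs0)) hsr
    (by rw [hT.iso _ (hp r hr0) _ (hp s hs0), hE r s hr0 (by linarith)])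
  have hz' : (t / r) • f₁ + (1 : ℝ) • f₂ ∈ C'.K := hf.mem (by positivity) one_pos
  obtain ⟨z, hz, hzz'⟩ := hT.surj _ hz'
  have E1 : C.E (r • e₁ + (1 : ℝ) • e₂) z = t / r := by
    rw [← hT.iso _ (hp r hr0) z hz, ← E_par (hT.maps _ (hp r hr0)) (hT.maps z hz) (Par.refl _) hzz',
      ← hsum, show f₁ + f₂ = (1 : ℝ) • f₁ + (1 : ℝ) • f₂ by module,
      hf.E_of_le one_pos one_pos (by positivity) one_pos]
    · field_simp
    · rw [div_one, div_one, le_div_iff₀ hr0]; linarith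
  have E2 : C.E z (s • e₁ + (1 : ℝ) • e₂) = s / t := by
    rw [← hT.iso z hz _ (hp s hs0), ← E_par (hT.maps z hz) (hT.maps _ (hp s hs0)) hzz' hpar,
      show (s / r) • f₁ + f₂ = (s / r) • f₁ + (1 : ℝ) • f₂ by module,
      hf.E_of_le (by positivity) one_pos (by positivity) one_pos]
    · field_simp
    · rw [div_one, div_one, div_le_div_iff_of_pos_right hr0]; linarith
  obtain ⟨p, q, hpq⟩ := hr r 1 s 1 hr0 one_pos hs0 one_pos z hz (by
    rw [E1, E2, hE r s hr0 (by linarith)]; field_simp)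
  have hp0 : 0 < p := h.left_pos (q := q) (hpq ▸ hz)
  have hq0 : 0 < q := h.right_pos (p := p) (hpq ▸ hz)
  have hpt : p / q = t := by
    rw [hpq, h.E_eq hr0 one_pos hp0 hq0, ← Real.exp_log (show 0 < t / r by positivity),
      Real.exp_eq_exp, Real.log_div ht0.ne' hr0.ne', div_one] at E1
    rw [hpq, h.E_eq hp0 hq0 hs0 one_pos, ← Real.exp_log (show 0 < s / t by positivity),
      Real.exp_eq_exp, Real.log_div hs0.ne' ht0.ne', div_one] at E2
    have l1 := Real.log_lt_log hr0 hrt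
    have l2 := Real.log_lt_log ht0 hts
    apply Real.log_injOn_pos (show 0 < p / q by positivity) ht0
    rcases abs_cases (Real.log r - Real.log (p / q)) with h1 | h1 <;>
    rcases abs_cases (Real.log (p / q) - Real.log s) with h2 | h2 <;> linarith
  have hzt : Par z (t • e₁ + (1 : ℝ) • e₂) := by
    refine ⟨q⁻¹, by positivity, ?_⟩
    rw [hpq, ← hpt]
    match_scalars <;> field_simp
  obtain ⟨k, hk, hkk⟩ := hzz'.symm.trans (hT.par hz hzt)
  obtain ⟨c, hc, hcc⟩ := hpar
  have hsr' : s - r ≠ 0 := by linarith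
  have hf1 : f₁ = (r / (s - r)) • (c • T (s • e₁ + (1 : ℝ) • e₂) - T (r • e₁ + (1 : ℝ) • e₂)) := by
    rw [← hcc, ← hsum]
    match_scalars <;> field_simp <;> ring
  refine ⟨k * ((s - t) / (s - r)), k * (c * ((t - r) / (s - r))), ?_, ?_, ?_⟩
  · exact mul_ne_zero hk.ne' (div_ne_zero (by linarith) hsr')
  · exact mul_ne_zero hk.ne' (mul_ne_zero hc.ne' (div_ne_zero (by linarith) hsr'))
  · rw [hkk, show (t / r) • f₁ + (1 : ℝ) • f₂ = (f₁ + f₂) + (t / r - 1) • f₁ by module, hsum, hf1]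
    match_scalars <;> field_simp <;> ring

/-- A rigid line is mapped onto a line, by a map which is linear for suitable representatives
of the end directions. -/
lemma HIso.line_image (hT : HIso C C' T) (h : C.Line e₁ e₂) (hr : C.Rig e₁ e₂) :
    ∃ e₁' e₂', C'.Line e₁' e₂' ∧ ∀ a b : ℝ, 0 < a → 0 < b →
      Par (T (a • e₁ + b • e₂)) (a • e₁' + b • e₂') := by
  have hp : ∀ r : ℝ, 0 < r → r • e₁ + (1 : ℝ) • e₂ ∈ C.K := fun r hr => h.mem hr one_pos
  have hE : ∀ r s : ℝ, 0 < r → 0 < s →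
      C.E (r • e₁ + (1 : ℝ) • e₂) (s • e₁ + (1 : ℝ) • e₂) =
        Real.exp |Real.log r - Real.log s| := by
    intro r s hr hs
    rw [h.E_eq hr one_pos hs one_pos, div_one, div_one]
  have two : (0 : ℝ) < 2 := two_pos
  have l2 : 0 < Real.log 2 := Real.log_pos one_lt_two
  obtain ⟨f₁, f₂, hf, hsum, hpar⟩ := exists_line (hT.maps _ (hp 1 one_pos)) (hT.maps _ (hp 2 two))
    one_lt_two (by
      rw [hT.iso _ (hp 1 one_pos) _ (hp 2 two), hE 1 2 one_pos two, Real.log_one, zero_sub, abs_neg,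
        abs_of_pos l2, Real.exp_log two])
  refine ⟨f₁, f₂, hf, ?_⟩
  have key : ∀ s : ℝ, 0 < s → Par (T (s • e₁ + (1 : ℝ) • e₂)) (s • f₁ + (1 : ℝ) • f₂) := by
    intro s hs
    obtain ⟨c, hc, hcc⟩ := hpar
    have h2 : T ((2 : ℝ) • e₁ + (1 : ℝ) • e₂) = (2 * c⁻¹) • f₁ + c⁻¹ • f₂ := by
      rw [← inv_smul_smul₀ hc.ne' (T _), ← hcc]; module
    have hspan : ∃ p q : ℝ, T (s • e₁ + (1 : ℝ) • e₂) = p • f₁ + q • f₂ := by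
      rcases lt_trichotomy s 1 with hs1 | rfl | hs1
      · obtain ⟨a, b, ha, hb, hab⟩ := hT.mid h hr hs hs1 one_lt_two
        rw [← hsum, h2] at hab
        refine ⟨a⁻¹ * (1 - b * (2 * c⁻¹)), a⁻¹ * (1 - b * c⁻¹), ?_⟩
        rw [← inv_smul_smul₀ ha (T _), eq_sub_iff_add_eq.2 hab.symm]; module
      · exact ⟨1, 1, by rw [← hsum]; module⟩
      · rcases lt_trichotomy s 2 with hs2 | rfl | hs2
        · obtain ⟨a, b, ha, hb, hab⟩ := hT.mid h hr one_pos hs1 hs2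
          rw [← hsum, h2] at hab
          exact ⟨a + b * (2 * c⁻¹), a + b * c⁻¹, by rw [hab]; module⟩
        · exact ⟨_, _, h2⟩
        · obtain ⟨a, b, ha, hb, hab⟩ := hT.mid h hr one_pos one_lt_two hs2
          rw [← hsum, h2, ← sub_eq_iff_eq_add'] at hab
          refine ⟨b⁻¹ * (2 * c⁻¹ - a), b⁻¹ * (c⁻¹ - a), ?_⟩
          rw [← inv_smul_smul₀ hb (T (s • _ + _)), ← hab]; module
    obtain ⟨p, q, hpq⟩ := hspan
    have hq := hT.maps _ (hp s hs)
    have hp0 : 0 < p := hf.left_pos (q := q) (hpq ▸ hq)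
    have hq0 : 0 < q := hf.right_pos (p := p) (hpq ▸ hq)
    have E1 := hT.iso _ (hp 1 one_pos) _ (hp s hs)
    have E2 := hT.iso _ (hp 2 two) _ (hp s hs)
    rw [hE 1 s one_pos hs, hpq, ← hsum, show f₁ + f₂ = (1 : ℝ) • f₁ + (1 : ℝ) • f₂ by module,
      hf.E_eq one_pos one_pos hp0 hq0, Real.exp_eq_exp, div_one, Real.log_one] at E1
    rw [hE 2 s two hs, hpq, h2, hf.E_eq (by positivity) (by positivity) hp0 hq0, Real.exp_eq_exp,
      mul_div_assoc, div_self (inv_pos.2 hc).ne', mul_one] at E2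
    have hps : p / q = s := by
      apply Real.log_injOn_pos (show 0 < p / q by positivity) hs
      rcases abs_cases (0 - Real.log (p / q)) with h1 | h1 <;>
      rcases abs_cases (0 - Real.log s) with h2 | h2 <;>
      rcases abs_cases (Real.log 2 - Real.log (p / q)) with h3 | h3 <;>
      rcases abs_cases (Real.log 2 - Real.log s) with h4 | h4 <;> linarith
    refine ⟨q⁻¹, by positivity, ?_⟩
    rw [hpq, ← hps]
    match_scalars <;> field_simp
  intro a b ha hb
  have h1 : Par ((a / b) • e₁ + (1 : ℝ) • e₂) (a • e₁ + b • e₂) :=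
    ⟨b, hb, by match_scalars <;> field_simp⟩
  have h2 : Par ((a / b) • f₁ + (1 : ℝ) • f₂) (a • f₁ + b • f₂) :=
    ⟨b, hb, by match_scalars <;> field_simp⟩
  exact ((hT.par (hp _ (by positivity)) h1).symm.trans (key _ (by positivity))).trans h2

/-- The line through `x` with `e` as one end direction. -/
lemma exists_line_through (hx : x ∈ C.K) (he : e ∈ C.B) (he0 : e ≠ 0) :
    ∃ m : ℝ, 0 < m ∧ C.Line e (m • x - e) := by
  refine ⟨C.M e x, M_pos he.1 he0 hx, he, M_mem_B hx, ?_⟩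
  rw [add_sub_cancel]
  exact C.K_smul (M_pos he.1 he0 hx) hx

/-- A ray towards an extreme direction is mapped onto a ray. -/
lemma HIso.ray_image (hT : HIso C C' T) (hx : x ∈ C.K) (he : e ∈ C.B) (he0 : e ≠ 0)
    (hex : C.Extr e) :
    ∃ η ∈ C'.B, η ≠ 0 ∧ ∀ s : ℝ, 0 ≤ s → Par (T (x + s • e)) (T x + s • η) := by
  obtain ⟨m, hm, hl⟩ := exists_line_through hx he he0
  obtain ⟨f₁, f₂, hf, himg⟩ := hT.line_image hl (hl.rig_of_disj (hl.disj_of_extr hex))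
  have him : ∀ s : ℝ, 0 ≤ s → Par (T (x + s • e)) ((s + m⁻¹) • f₁ + m⁻¹ • f₂) := by
    intro s hs
    convert himg (s + m⁻¹) m⁻¹ (by positivity) (by positivity) using 2
    match_scalars <;> field_simp <;> ring
  obtain ⟨c, hc, hcc⟩ := him 0 le_rfl
  rw [zero_smul, add_zero, zero_add] at hcc
  refine ⟨c⁻¹ • f₁, smul_mem_B (by positivity) hf.left, smul_ne_zero (by positivity) hf.left_ne_zero,
    fun s hs => (him s hs).trans ⟨c⁻¹, by positivity, ?_⟩⟩
  rw [show (s + m⁻¹) • f₁ + m⁻¹ • f₂ = s • f₁ + (m⁻¹ • f₁ + m⁻¹ • f₂) by module, hcc]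
  match_scalars <;> field_simp

/-- If two rays stay at bounded distance, then the end direction of one is dominated by that of
the other. -/
lemma dom_of_bounded {f g : V} (hx : x ∈ C.K) (hy : y ∈ C.K) (hf : f ∈ C.P) (hg : g ∈ C.P)
    (hg0 : g ≠ 0) {R : ℝ} (h : ∀ s : ℝ, 1 ≤ s → C.E (x + s • f) (y + s • g) ≤ R) :
    C.Dom g f := by
  have hA : x + f ∈ C.K := C.K_add hx hf
  set m := C.M g (x + f) with hm
  have hm0 : 0 < m := M_pos hg hg0 hA
  have hR : 0 ≤ R := (E_pos (C.K_add hx (C.smul_mem zero_le_one hf))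
    (C.K_add hy (C.smul_mem zero_le_one hg))).le.trans (h 1 le_rfl)
  have hmain : ∀ s : ℝ, 1 ≤ s → (R / m) • (y + s • g) - (x + s • f) ∈ C.P := by
    intro s hs
    have hxs : x + s • f ∈ C.K := C.K_add hx (C.smul_mem (by linarith) hf)
    have hys : y + s • g ∈ C.K := C.K_add hy (C.smul_mem (by linarith) hg)
    have hm2 : m ≤ C.M (y + s • g) (x + s • f) := by
      rw [hm, M_le_iff hA]
      have h1 := M_spec (C := C) (x := y + s • g) hxs
      have hp := M_posK hys hxs
      set μ := C.M (y + s • g) (x + s • f)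
      have hs0 : 0 < s := by linarith
      have h2 : (1 - s⁻¹) * μ ≥ 0 :=
        mul_nonneg (by rw [sub_nonneg]; exact inv_le_one_of_one_le₀ hs) hp.le
      have := C.add_mem (C.smul_mem (c := s⁻¹) (by positivity) (C.add_mem h1 (C.sub hy)))
        (C.smul_mem h2 (C.sub hx))
      convert this using 1
      match_scalars <;> field_simp <;> ring
    rw [← M_le_iff hys, le_div_iff₀ hm0]
    exact (mul_le_mul_of_nonneg_left hm2 (M_posK hxs hys).le).trans (h s hs)
  refine Dom.of_le (c := R / m) hg (by positivity) hf ?_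
  apply C.closed (y := (R / m) • y)
  intro ε hε
  set s := max 1 ε⁻¹ with hs
  have hs1 : 1 ≤ s := le_max_left _ _
  have hs0 : 0 < s := by linarith
  have hsε : s⁻¹ ≤ ε := inv_le_of_inv_le₀ hε (le_max_right _ _)
  have h1 := C.smul_mem (c := s⁻¹) (by positivity) (C.add_mem (hmain s hs1) (C.sub hx))
  have h2 := C.smul_mem (c := (ε - s⁻¹) * (R / m))
    (mul_nonneg (by linarith) (by positivity)) (C.sub hy)
  convert C.add_mem h1 h2 using 1
  match_scalars <;> field_simp <;> ring

/-- Two rays with the same end direction stay at bounded distance. -/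
lemma E_add_le {f : V} (hx : x ∈ C.K) (hy : y ∈ C.K) (hf : f ∈ C.P) {s : ℝ} (hs : 0 ≤ s) :
    C.E (x + s • f) (y + s • f) ≤ max 1 (C.M x y) * max 1 (C.M y x) := by
  have key : ∀ x y : V, x ∈ C.K → y ∈ C.K → C.M (x + s • f) (y + s • f) ≤ max 1 (C.M x y) := by
    intro x y hx hy
    rw [M_le_iff (C.K_add hy (C.smul_mem hs hf))]
    have h1 := C.smul_mem (c := (max 1 (C.M x y) - 1) * s)
      (mul_nonneg (by linarith [le_max_left 1 (C.M x y)]) hs) hf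
    have h2 := (M_le_iff (x := x) hy).1 (le_max_right 1 (C.M x y))
    convert C.add_mem h1 h2 using 1
    module
  exact mul_le_mul (key x y hx hy) (key y x hy hx)
    (M_posK (C.K_add hy (C.smul_mem hs hf)) (C.K_add hx (C.smul_mem hs hf))).le
    (le_trans zero_le_one (le_max_left _ _))

lemma HIso.rig_image (hT : HIso C C' T) (h : C.Line e₁ e₂) (hr : C.Rig e₁ e₂)
    (hi : ∀ a b : ℝ, 0 < a → 0 < b → Par (T (a • e₁ + b • e₂)) (a • e₁' + b • e₂')) :
    C'.Rig e₁' e₂' := by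
  intro a b c d ha hb hc hd z' hz' hE
  obtain ⟨z, hz, hzz'⟩ := hT.surj z' hz'
  have hx := h.mem ha hb
  have hy := h.mem hc hd
  rw [E_par (hT.maps _ hx) (hT.maps _ hz) (hi a b ha hb) hzz',
    E_par (hT.maps _ hz) (hT.maps _ hy) hzz' (hi c d hc hd),
    E_par (hT.maps _ hx) (hT.maps _ hy) (hi a b ha hb) (hi c d hc hd),
    hT.iso _ hx _ hz, hT.iso _ hz _ hy, hT.iso _ hx _ hy] at hE
  obtain ⟨p, q, hpq⟩ := hr a b c d ha hb hc hd z hz hE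
  have hp0 : 0 < p := h.left_pos (q := q) (hpq ▸ hz)
  have hq0 : 0 < q := h.right_pos (p := p) (hpq ▸ hz)
  obtain ⟨k, hk, hkk⟩ := (hi p q hp0 hq0).symm.trans (hpq ▸ hzz')
  exact ⟨k * p, k * q, by rw [hkk]; module⟩

/-- Images of rays towards the extreme direction `e₁` all have the same end direction. The image
direction `η` of such a ray generates the same face as `e₁'`, so the line from `η` to `e₂'` is
again rigid; its preimage is a line asymptotic to the original one at both ends, hence equal to it
because `e₁` and `e₂` are extreme. -/
lemma HIso.focus (hT : HIso C C' T) (h : C.Line e₁ e₂) (hex₁ : C.Extr e₁) (hex₂ : C.Extr e₂)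
    (h' : C'.Line e₁' e₂')
    (hi : ∀ a b : ℝ, 0 < a → 0 < b → Par (T (a • e₁ + b • e₂)) (a • e₁' + b • e₂'))
    (hx : x ∈ C.K) {η : V'} (hη : η ∈ C'.B) (hη0 : η ≠ 0)
    (hray : ∀ s : ℝ, 0 ≤ s → Par (T (x + s • e₁)) (T x + s • η)) : Par e₁' η := by
  have hu := h.add
  have hi1 : ∀ s : ℝ, 0 ≤ s → Par (T (e₁ + e₂ + s • e₁)) (e₁' + e₂' + s • e₁') := by
    intro s hs
    have := hi (1 + s) 1 (by positivity) one_pos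
    rwa [show (1 + s) • e₁ + (1 : ℝ) • e₂ = e₁ + e₂ + s • e₁ by module,
      show (1 + s) • e₁' + (1 : ℝ) • e₂' = e₁' + e₂' + s • e₁' by module] at this
  have hxs : ∀ s : ℝ, 0 ≤ s → x + s • e₁ ∈ C.K := fun s hs => C.K_add hx (C.smul_mem hs h.left.1)
  have hus : ∀ s : ℝ, 0 ≤ s → e₁ + e₂ + s • e₁ ∈ C.K :=
    fun s hs => C.K_add hu (C.smul_mem hs h.left.1)
  have hbd : ∀ s : ℝ, 1 ≤ s → C'.E (T x + s • η) (e₁' + e₂' + s • e₁') ≤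
      max 1 (C.M x (e₁ + e₂)) * max 1 (C.M (e₁ + e₂) x) := by
    intro s hs
    have hs0 : 0 ≤ s := by linarith
    rw [E_par (hT.maps _ (hxs s hs0)) (hT.maps _ (hus s hs0)) (hray s hs0) (hi1 s hs0),
      hT.iso _ (hxs s hs0) _ (hus s hs0)]
    exact E_add_le hx hu h.left.1 hs0
  have d1 : C'.Dom e₁' η := dom_of_bounded (hT.maps x hx) h'.add hη.1 h'.left.1 h'.left_ne_zero hbd
  have d2 : C'.Dom η e₁' := dom_of_bounded h'.add (hT.maps x hx) h'.left.1 hη.1 hη0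
    (fun s hs => by rw [E_symm]; exact hbd s hs)
  -- the line with end directions `η` and `e₂'` is rigid
  obtain ⟨c, hc, c1, c2⟩ := d1
  obtain ⟨d, hd, d3, d4⟩ := d2
  have d1 : C'.Dom e₁' η := ⟨c, hc, c1, c2⟩
  have hsum : η + e₂' ∈ C'.K := by
    have h1 := C'.K_add h'.add d4
    have h2 := C'.K_add h1 (C'.add_mem hη.1 (C'.smul_mem hd h'.right.1))
    convert C'.K_smul (c := (d + 1)⁻¹) (by positivity) h2 using 1
    match_scalars <;> field_simp <;> ring
  have hl : C'.Line η e₂' := ⟨hη, h'.right, hsum⟩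
  have hdisj : C'.Disj η e₂' := fun w w1 w2 =>
    h'.disj_of_rig (hT.rig_image h (h.rig_of_disj (h.disj_of_extr hex₁)) hi) w (d1.trans w1) w2
  obtain ⟨S, hS, hTS⟩ := hT.exists_inv
  obtain ⟨f₁, f₂, hf, hfi⟩ := hS.line_image hl (hl.rig_of_disj hdisj)
  -- its preimage is asymptotic to the original line at both ends
  have hbd2 : ∀ a b : ℝ, 0 < a → 0 < b → C.E (a • f₁ + b • f₂) (a • e₁ + b • e₂) ≤
      max c 1 * max d 1 := by
    intro a b ha hb
    have k1 := h.mem ha hb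
    have k2 := hl.mem ha hb
    have k3 := h'.mem ha hb
    rw [E_par (hS.maps _ k2) k1 (hfi a b ha hb) (Par.refl _), ← hT.iso _ (hS.maps _ k2) _ k1,
      ← E_par (hT.maps _ (hS.maps _ k2)) (hT.maps _ k1) (hTS _ k2) (hi a b ha hb)]
    refine mul_le_mul ?_ ?_ (M_posK k3 k2).le (le_trans zero_le_one (le_max_right _ _))
    · rw [M_le_iff k3]
      have e1 := C'.smul_mem ha.le c2
      have e2 := C'.smul_mem (c := (max c 1 - c) * a)
        (mul_nonneg (by linarith [le_max_left c 1]) ha.le) h'.left.1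
      have e3 := C'.smul_mem (c := (max c 1 - 1) * b)
        (mul_nonneg (by linarith [le_max_right c 1]) hb.le) h'.right.1
      convert C'.add_mem (C'.add_mem e1 e2) e3 using 1
      module
    · rw [M_le_iff k2]
      have e1 := C'.smul_mem ha.le d4
      have e2 := C'.smul_mem (c := (max d 1 - d) * a)
        (mul_nonneg (by linarith [le_max_left d 1]) ha.le) hη.1
      have e3 := C'.smul_mem (c := (max d 1 - 1) * b)
        (mul_nonneg (by linarith [le_max_right d 1]) hb.le) h'.right.1
      convert C'.add_mem (C'.add_mem e1 e2) e3 using 1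
      module
  have q1 : C.Dom e₁ f₁ := dom_of_bounded hf.add h.add hf.left.1 h.left.1 h.left_ne_zero
    (fun s hs => by
      convert hbd2 (1 + s) 1 (by linarith) one_pos using 2 <;> module)
  have q2 : C.Dom e₂ f₂ := dom_of_bounded hf.add h.add hf.right.1 h.right.1 h.right_ne_zero
    (fun s hs => by
      convert hbd2 1 (1 + s) one_pos (by linarith) using 2 <;> module)
  obtain ⟨k₁, hk₁⟩ := hex₁.of_dom q1
  obtain ⟨k₂, hk₂⟩ := hex₂.of_dom q2
  have hK : k₁ • e₁ + k₂ • e₂ ∈ C.K := by rw [← hk₁, ← hk₂]; exact hf.add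
  have hpar : Par (η + e₂') (k₁ • e₁' + k₂ • e₂') := by
    have h1 := hTS _ hsum
    have h2 := hfi 1 1 one_pos one_pos
    rw [one_smul, one_smul, one_smul, one_smul, hk₁, hk₂] at h2
    exact (h1.symm.trans (hT.par (hS.maps _ hsum) h2)).trans (hi _ _ (h.left_pos hK) (h.right_pos hK))
  obtain ⟨k, hk, hkk⟩ := hpar.symm
  have hη2 : η = (k * k₁) • e₁' + (k * k₂ - 1) • e₂' := by
    rw [eq_sub_of_add_eq hkk]; module
  have hq : k * k₂ - 1 = 0 := h'.disj_of_span (hη2 ▸ d1)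
  rw [hq, zero_smul, add_zero] at hη2
  exact ⟨k * k₁, mul_pos hk (h.left_pos hK), hη2⟩

end HCone

/-! ### Lifting the isometry to the cones -/

namespace HCone

variable {V V' : Type*} [AddCommGroup V] [Module ℝ V] [AddCommGroup V'] [Module ℝ V']
variable {C : HCone V} {C' : HCone V'} {T : V → V'} {e' e₁' e₂' : V'}
  {G G₁ G₂ : V → V'} {x y z e e₁ e₂ : V}

/-- A representative `y₁` of a ray is determined by the ray through `y₁ + e'`, for a nonzero
boundary vector `e'`. -/
lemma lift_unique {y₁ y₂ : V'} (hy : y₁ ∈ C'.K) (he : e' ∈ C'.B) (he0 : e' ≠ 0) (h1 : Par y₁ y₂)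
    (h2 : Par (y₁ + e') (y₂ + e')) : y₁ = y₂ := by
  obtain ⟨m, hm, hl⟩ := exists_line_through hy he he0
  obtain ⟨c, hc, rfl⟩ := h1
  obtain ⟨d, hd, h⟩ := h2
  obtain ⟨hp, hq⟩ := hl.indep (p := (c - d) - m * (d - 1)) (q := c - d) (by
    have h3 : (c - d) • y₁ = (d - 1) • e' := by
      rw [← sub_eq_zero] at h ⊢
      rw [← h]; module
    have h4 := congrArg (fun v => m • v) h3
    simp only [smul_smul] at h4
    rw [← sub_eq_zero] at h4
    rw [← h4]; module)
  rw [hq, zero_sub, neg_eq_zero, mul_eq_zero] at hp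
  have : c = 1 := by
    rcases hp with hp | hp <;> linarith
  rw [this, one_smul]

/-- `G` chooses representatives of the rays `T x` such that the ray from `x` in direction `e` is
mapped to the ray from `G x` in direction `e'` with the same parameter. -/
structure IsLift (C : HCone V) (T : V → V') (e : V) (e' : V') (G : V → V') : Prop where
  par : ∀ x ∈ C.K, Par (T x) (G x)
  ray : ∀ x ∈ C.K, ∀ s : ℝ, 0 ≤ s → Par (T (x + s • e)) (G x + s • e')

lemma HIso.exists_lift (hT : HIso C C' T) (h : C.Line e₁ e₂) (hex₁ : C.Extr e₁) (hex₂ : C.Extr e₂)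
    (h' : C'.Line e₁' e₂')
    (hi : ∀ a b : ℝ, 0 < a → 0 < b → Par (T (a • e₁ + b • e₂)) (a • e₁' + b • e₂')) :
    ∃ G, C.IsLift T e₁ e₁' G := by
  have key : ∀ x ∈ C.K, ∃ y, Par (T x) y ∧ ∀ s : ℝ, 0 ≤ s → Par (T (x + s • e₁)) (y + s • e₁') := by
    intro x hx
    obtain ⟨η, hη, hη0, hray⟩ := hT.ray_image hx h.left h.left_ne_zero hex₁
    obtain ⟨c, hc, rfl⟩ := hT.focus h hex₁ hex₂ h' hi hx hη hη0 hray
    refine ⟨c⁻¹ • T x, Par.smul (by positivity) _, fun s hs =>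
      (hray s hs).trans ⟨c⁻¹, by positivity, ?_⟩⟩
    match_scalars <;> field_simp
  choose! G h1 h2 using key
  exact ⟨G, h1, h2⟩

lemma IsLift.mem (hG : C.IsLift T e e' G) (hT : HIso C C' T) (hx : x ∈ C.K) : G x ∈ C'.K :=
  mem_of_par (hT.maps x hx) (hG.par x hx)

lemma IsLift.eq (hG : C.IsLift T e e' G) (hT : HIso C C' T) (he : e' ∈ C'.B) (he0 : e' ≠ 0)
    (hx : x ∈ C.K) {w : V'} (h1 : Par (T x) w) (h2 : Par (T (x + e)) (w + e')) : G x = w := by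
  have h3 := hG.ray x hx 1 zero_le_one
  rw [one_smul, one_smul] at h3
  exact lift_unique (hG.mem hT hx) he he0 ((hG.par x hx).symm.trans h1) (h3.symm.trans h2)

lemma IsLift.smul (hG : C.IsLift T e e' G) (hT : HIso C C' T) (heP : e ∈ C.P) (he : e' ∈ C'.B)
    (he0 : e' ≠ 0) (hx : x ∈ C.K) {t : ℝ} (ht : 0 < t) : G (t • x) = t • G x := by
  apply hG.eq hT he he0 (C.K_smul ht hx)
  · exact ((hT.par hx (Par.smul ht x)).symm.trans (hG.par x hx)).trans (Par.smul ht _)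
  · have h1 := hG.ray x hx t⁻¹ (by positivity)
    have h2 : Par (x + t⁻¹ • e) (t • x + e) := ⟨t, ht, by match_scalars <;> field_simp⟩
    have h3 : Par (G x + t⁻¹ • e') (t • G x + e') := ⟨t, ht, by match_scalars <;> field_simp⟩
    exact ((hT.par (C.K_add hx (C.smul_mem (by positivity) heP)) h2).symm.trans h1).trans h3

lemma IsLift.add (hG : C.IsLift T e e' G) (hT : HIso C C' T) (heP : e ∈ C.P) (he : e' ∈ C'.B)
    (he0 : e' ≠ 0) (hx : x ∈ C.K) {s : ℝ} (hs : 0 ≤ s) : G (x + s • e) = G x + s • e' := by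
  apply hG.eq hT he he0 (C.K_add hx (C.smul_mem hs heP)) (hG.ray x hx s hs)
  have := hG.ray x hx (s + 1) (by positivity)
  rwa [add_smul, one_smul, add_smul, one_smul, ← add_assoc, ← add_assoc] at this

lemma E_add_self (hx : x ∈ C.K) (he : e ∈ C.B) : C.E x (x + e) = 1 + C.M e x := by
  have h1 : C.M x (x + e) = 1 := by
    apply M_eq (C.K_add hx he.1)
    rwa [one_smul, add_sub_cancel_left]
  rw [E, h1, one_mul, add_comm x e, M_add_self hx]

lemma IsLift.M_eq (hG : C.IsLift T e e' G) (hT : HIso C C' T) (he : e ∈ C.B) (he' : e' ∈ C'.B)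
    (hx : x ∈ C.K) : C'.M e' (G x) = C.M e x := by
  have h3 := hG.ray x hx 1 zero_le_one
  rw [one_smul, one_smul] at h3
  have h1 := E_add_self hx he
  have h2 := E_add_self (hG.mem hT hx) he'
  rw [E_par (hT.maps x hx) (hT.maps _ (C.K_add hx he.1)) (hG.par x hx) h3,
    hT.iso x hx _ (C.K_add hx he.1), h1] at h2
  linarith

lemma IsLift.line_left (hG : C.IsLift T e₁ e₁' G) (hT : HIso C C' T) (h : C.Line e₁ e₂)
    (h' : C'.Line e₁' e₂')
    (hi : ∀ a b : ℝ, 0 < a → 0 < b → Par (T (a • e₁ + b • e₂)) (a • e₁' + b • e₂')) {p q : ℝ}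
    (hp : 0 < p) (hq : 0 < q) : G (p • e₁ + q • e₂) = p • e₁' + q • e₂' := by
  apply hG.eq hT h'.left h'.left_ne_zero (h.mem hp hq) (hi p q hp hq)
  have := hi (p + 1) q (by positivity) hq
  rwa [show (p + 1) • e₁ + q • e₂ = p • e₁ + q • e₂ + e₁ by module,
    show (p + 1) • e₁' + q • e₂' = p • e₁' + q • e₂' + e₁' by module] at this

lemma le_one_of_growth {κ c : ℝ} (hc : 0 < c) (h : ∀ s : ℝ, 0 < s → κ * s ^ 2 ≤ (s + c) ^ 2) :
    κ ≤ 1 := by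
  by_contra hκ
  push Not at hκ
  obtain ⟨δ, hδ, rfl⟩ : ∃ δ : ℝ, 0 < δ ∧ κ = 1 + δ := ⟨κ - 1, by linarith, by ring⟩
  have hN : 0 < 3 / δ + 1 := by positivity
  have h1 := h (c * (3 / δ + 1)) (by positivity)
  have h2 : (c * (3 / δ + 1) + c) ^ 2 = c ^ 2 * (3 / δ + 1 + 1) ^ 2 := by ring
  rw [h2, mul_pow, mul_left_comm, mul_le_mul_iff_right₀ (by positivity)] at h1
  have h3 : δ * (3 / δ + 1) = 3 + δ := by field_simp
  have h4 : 1 < 3 / δ + 1 := by linarith [show 0 < 3 / δ by positivity]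
  generalize 3 / δ + 1 = N at *
  nlinarith [mul_pos hδ hN, mul_pos (mul_pos hδ hN) hN]

/-- The two lifts attached to the ends of a line satisfy `G₂ x ≤ G₁ x` off the image line. Their
ratio `κ` is constant along `x + s • (e₁ + e₂)`, and both lifts are controlled by the distance to
`e₁ + e₂`, which gives `κ s² ≤ (s + c)²` for all `s > 0`. -/
lemma IsLift.ratio_le_one (hG₁ : C.IsLift T e₁ e₁' G₁) (hG₂ : C.IsLift T e₂ e₂' G₂)
    (hT : HIso C C' T) (h : C.Line e₁ e₂) (h' : C'.Line e₁' e₂')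
    (hi : ∀ a b : ℝ, 0 < a → 0 < b → Par (T (a • e₁ + b • e₂)) (a • e₁' + b • e₂'))
    (hx : x ∈ C.K) {κ : ℝ} (hκ : 0 < κ) (hk : G₂ x = κ • G₁ x)
    (hns : ¬ ∃ p q : ℝ, G₁ x = p • e₁' + q • e₂') : κ ≤ 1 := by
  -- the ratio of the two lifts is constant along the ray from `x` in direction `e₁ + e₂`
  have hconst : ∀ s : ℝ, 0 < s → G₂ (x + s • (e₁ + e₂)) = κ • G₁ (x + s • (e₁ + e₂)) := by
    intro s hs
    have x1 : x + s • e₁ ∈ C.K := C.K_add hx (C.smul_mem hs.le h.left.1)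
    have x2 : x + s • e₂ ∈ C.K := C.K_add hx (C.smul_mem hs.le h.right.1)
    have xy : x + s • (e₁ + e₂) ∈ C.K := C.K_add hx (C.smul_mem hs.le (C.sub h.add))
    obtain ⟨a, ha, ha2⟩ := (hG₂.ray x hx s hs.le).symm.trans (hG₁.par _ x2)
    obtain ⟨b, hb, hb2⟩ := (hG₁.ray x hx s hs.le).symm.trans (hG₂.par _ x1)
    have y1 := hG₁.add hT h.left.1 h'.left h'.left_ne_zero x2 hs.le
    have y2 := hG₂.add hT h.right.1 h'.right h'.right_ne_zero x1 hs.le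
    rw [show x + s • e₂ + s • e₁ = x + s • (e₁ + e₂) by module] at y1
    rw [show x + s • e₁ + s • e₂ = x + s • (e₁ + e₂) by module] at y2
    obtain ⟨k, hk0, hk2⟩ := (hG₁.par _ xy).symm.trans (hG₂.par _ xy)
    have hrel := hk2
    rw [y1, y2, ha2, hb2, hk] at hrel
    have h0 : b - k * a * κ = 0 := by
      by_contra hne
      apply hns
      refine ⟨(b - k * a * κ)⁻¹ * (k * s - b * s), (b - k * a * κ)⁻¹ * (k * a * s - s), ?_⟩
      have h3 : (b - k * a * κ) • G₁ x = (k * s - b * s) • e₁' + (k * a * s - s) • e₂' := by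
        rw [← sub_eq_zero] at hrel ⊢
        rw [← hrel]; module
      rw [← inv_smul_smul₀ hne (G₁ x), h3]; module
    obtain ⟨h1, h2⟩ := h'.indep (p := (b - k) * s) (q := (1 - k * a) * s) (by
      rw [← sub_eq_zero] at hrel
      rw [← hrel, ← sub_eq_zero]
      have : (b - k * a * κ) • G₁ x = 0 := by rw [h0, zero_smul]
      rw [← neg_eq_zero] at this
      rw [← this]; module)
    have h1 : b = k := by
      rcases mul_eq_zero.1 h1 with h1 | h1 <;> linarith
    have h2 : k * a = 1 := by
      rcases mul_eq_zero.1 h2 with h2 | h2 <;> linarith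
    have : k = κ := by rw [h2] at h0; linarith
    rw [hk2, this]
  obtain ⟨c, hc, hcx⟩ := C.unit h.add (-x)
  rw [← sub_eq_add_neg] at hcx
  apply le_one_of_growth hc
  intro s hs
  have hyx : x + s • (e₁ + e₂) ∈ C.K := C.K_add hx (C.smul_mem hs.le (C.sub h.add))
  have hG2 := hG₂.M_eq hT h.right h'.right hyx
  have hG1 := hG₁.M_eq hT h.left h'.left hyx
  have hgm := hG₁.mem hT hyx
  have hgp := hG₁.par _ hyx
  rw [hconst s hs, ← one_smul ℝ e₂', M_smul one_pos hκ hgm] at hG2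
  have b1 : C.M e₁ (x + s • (e₁ + e₂)) ≤ 1 / s := by
    rw [M_le_iff hyx]
    convert C.add_mem (C.smul_mem (c := 1 / s) (by positivity) (C.sub hx)) h.right.1 using 1
    match_scalars <;> field_simp <;> ring
  have b2 : C.M (x + s • (e₁ + e₂)) (e₁ + e₂) ≤ s + c := by
    rw [M_le_iff h.add]
    convert C.sub hcx using 1
    module
  have b3 : C.M (e₁ + e₂) (x + s • (e₁ + e₂)) ≤ 1 / s := by
    rw [M_le_iff hyx]
    convert C.smul_mem (c := 1 / s) (by positivity) (C.sub hx) using 1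
    match_scalars <;> field_simp <;> ring
  have b4 : 1 ≤ C.M e₂ (x + s • (e₁ + e₂)) * C.M (x + s • (e₁ + e₂)) (e₁ + e₂) := by
    have := M_triangle h.right.1 hyx h.add
    rwa [HCone.M_eq (l := 1) h.add (by
      rw [one_smul, add_sub_cancel_right]; exact h.left)] at this
  have b5 : 1 ≤ C'.M e₁' (G₁ (x + s • (e₁ + e₂))) * C'.M (G₁ (x + s • (e₁ + e₂))) (e₁' + e₂') := by
    have := M_triangle h'.left.1 hgm h'.add
    rwa [HCone.M_eq (l := 1) h'.add (by
      rw [one_smul, add_sub_cancel_left]; exact h'.right)] at this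
  have b6 : C'.M e₂' (G₁ (x + s • (e₁ + e₂))) ≤ C'.M (e₁' + e₂') (G₁ (x + s • (e₁ + e₂))) := by
    rw [M_le_iff hgm]
    convert C'.add_mem (M_spec (C := C') (x := e₁' + e₂') hgm) h'.left.1 using 1
    module
  have b7 : C'.M (G₁ (x + s • (e₁ + e₂))) (e₁' + e₂') * C'.M (e₁' + e₂') (G₁ (x + s • (e₁ + e₂)))
      = C.M (x + s • (e₁ + e₂)) (e₁ + e₂) * C.M (e₁ + e₂) (x + s • (e₁ + e₂)) := by
    change C'.E _ _ = C.E _ _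
    have hu := hi 1 1 one_pos one_pos
    rw [one_smul, one_smul, one_smul, one_smul] at hu
    rw [E_par (hT.maps _ hyx) (hT.maps _ h.add) hgp hu, hT.iso _ hyx _ h.add]
  rw [hG1] at b5
  have p1 := M_pos h.left.1 h.left_ne_zero hyx
  have p2 := M_pos h.right.1 h.right_ne_zero hyx
  have p3 := M_posK hyx h.add
  have p4 := M_posK h.add hyx
  have p5 := M_posK h'.add hgm
  generalize hyd : x + s • (e₁ + e₂) = y at *
  have c1 : κ * C.M e₂ y = C'.M e₂' (G₁ y) := by rw [← hG2]; field_simp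
  have c2 : C'.M (e₁' + e₂') (G₁ y) ≤ C.M e₁ y * (C.M y (e₁ + e₂) * C.M (e₁ + e₂) y) := by
    rw [← b7]
    nlinarith
  have c3 : κ ≤ (κ * C.M e₂ y) * C.M y (e₁ + e₂) := by nlinarith
  have c4 : κ ≤ C.M e₁ y * (C.M y (e₁ + e₂) * C.M (e₁ + e₂) y) * C.M y (e₁ + e₂) :=
    c3.trans (mul_le_mul_of_nonneg_right (by linarith) p3.le)
  have c5 : κ ≤ 1 / s * ((s + c) * (1 / s)) * (s + c) := c4.trans (by gcongr)
  calc κ * s ^ 2 ≤ 1 / s * ((s + c) * (1 / s)) * (s + c) * s ^ 2 := by gcongr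
    _ = (s + c) ^ 2 := by field_simp

/-- The lifts attached to the two ends of the line coincide. -/
lemma IsLift.unique (hG₁ : C.IsLift T e₁ e₁' G₁) (hG₂ : C.IsLift T e₂ e₂' G₂)
    (hT : HIso C C' T) (h : C.Line e₁ e₂) (h' : C'.Line e₁' e₂')
    (hi : ∀ a b : ℝ, 0 < a → 0 < b → Par (T (a • e₁ + b • e₂)) (a • e₁' + b • e₂'))
    (hx : x ∈ C.K) : G₂ x = G₁ x := by
  have hi' : ∀ a b : ℝ, 0 < a → 0 < b → Par (T (a • e₂ + b • e₁)) (a • e₂' + b • e₁') := by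
    intro a b ha hb
    rw [add_comm (a • e₂), add_comm (a • e₂')]
    exact hi b a hb ha
  by_cases hs : ∃ p q : ℝ, G₁ x = p • e₁' + q • e₂'
  · obtain ⟨p, q, hpq⟩ := hs
    have hm := hG₁.mem hT hx
    have hp : 0 < p := h'.left_pos (q := q) (hpq ▸ hm)
    have hq : 0 < q := h'.right_pos (p := p) (hpq ▸ hm)
    have hK := h.mem hp hq
    obtain ⟨c, hc, rfl⟩ : Par (p • e₁ + q • e₂) x := by
      apply hT.par_of hK hx
      exact (hi p q hp hq).trans (hpq ▸ (hG₁.par x hx).symm)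
    rw [hG₁.smul hT h.left.1 h'.left h'.left_ne_zero hK hc,
      hG₂.smul hT h.right.1 h'.right h'.right_ne_zero hK hc,
      hG₁.line_left hT h h' hi hp hq, add_comm (p • e₁), hG₂.line_left hT h.symm h'.symm hi' hq hp,
      add_comm (p • e₁')]
  · obtain ⟨κ, hκ, hk⟩ := (hG₁.par x hx).symm.trans (hG₂.par x hx)
    have k1 := hG₁.ratio_le_one hG₂ hT h h' hi hx hκ hk hs
    have k2 : κ⁻¹ ≤ 1 := by
      refine hG₂.ratio_le_one hG₁ hT h.symm h'.symm hi' hx (by positivity)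
        (by rw [hk, inv_smul_smul₀ hκ.ne']) ?_
      rintro ⟨p, q, hpq⟩
      refine hs ⟨κ⁻¹ * q, κ⁻¹ * p, ?_⟩
      rw [← inv_smul_smul₀ hκ.ne' (G₁ x), ← hk, hpq]; module
    have : κ = 1 := le_antisymm k1 (by rwa [inv_le_one₀ hκ] at k2)
    rw [hk, this, one_smul]

/-- A positively homogeneous lift of an isometry to the cones, compatible with translations along
the plane of the line from `e₁` to `e₂`. -/
structure Lift (C : HCone V) (C' : HCone V') (e₁ e₂ : V) (e₁' e₂' : V') (G : V → V') : Prop where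
  maps : ∀ x ∈ C.K, G x ∈ C'.K
  iso : ∀ x ∈ C.K, ∀ y ∈ C.K, C'.E (G x) (G y) = C.E x y
  smul : ∀ x ∈ C.K, ∀ t : ℝ, 0 < t → G (t • x) = t • G x
  add : ∀ x ∈ C.K, ∀ a b : ℝ, 0 ≤ a → 0 ≤ b →
    G (x + (a • e₁ + b • e₂)) = G x + (a • e₁' + b • e₂')
  line : ∀ a b : ℝ, 0 < a → 0 < b → G (a • e₁ + b • e₂) = a • e₁' + b • e₂'
  surj : ∀ y ∈ C'.K, ∃ x ∈ C.K, G x = y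

theorem HIso.exists_Lift (hT : HIso C C' T) (h : C.Line e₁ e₂) (hex₁ : C.Extr e₁)
    (hex₂ : C.Extr e₂) :
    ∃ e₁' e₂' G, C'.Line e₁' e₂' ∧ Lift C C' e₁ e₂ e₁' e₂' G ∧ ∀ x ∈ C.K, Par (T x) (G x) := by
  obtain ⟨e₁', e₂', h', hi⟩ := hT.line_image h (h.rig_of_disj (h.disj_of_extr hex₁))
  have hi' : ∀ a b : ℝ, 0 < a → 0 < b → Par (T (a • e₂ + b • e₁)) (a • e₂' + b • e₁') := by
    intro a b ha hb
    rw [add_comm (a • e₂), add_comm (a • e₂')]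
    exact hi b a hb ha
  obtain ⟨G, hG⟩ := hT.exists_lift h hex₁ hex₂ h' hi
  obtain ⟨G₂, hG₂⟩ := hT.exists_lift h.symm hex₂ hex₁ h'.symm hi'
  have hGG : ∀ x ∈ C.K, G₂ x = G x := fun x hx => hG.unique hG₂ hT h h' hi hx
  have hsmul : ∀ x ∈ C.K, ∀ t : ℝ, 0 < t → G (t • x) = t • G x :=
    fun x hx t ht => hG.smul hT h.left.1 h'.left h'.left_ne_zero hx ht
  refine ⟨e₁', e₂', G, h', ⟨fun x hx => hG.mem hT hx, ?_, hsmul, ?_,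
    fun a b ha hb => hG.line_left hT h h' hi ha hb, ?_⟩, hG.par⟩
  · intro x hx y hy
    rw [E_par (hT.maps x hx) (hT.maps y hy) (hG.par x hx) (hG.par y hy), hT.iso x hx y hy]
  · intro x hx a b ha hb
    have x1 : x + a • e₁ ∈ C.K := C.K_add hx (C.smul_mem ha h.left.1)
    rw [← add_assoc, ← hGG _ (C.K_add x1 (C.smul_mem hb h.right.1)),
      hG₂.add hT h.right.1 h'.right h'.right_ne_zero x1 hb, hGG _ x1,
      hG.add hT h.left.1 h'.left h'.left_ne_zero hx ha, add_assoc]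
  · intro y hy
    obtain ⟨x, hx, hxy⟩ := hT.surj y hy
    obtain ⟨c, hc, rfl⟩ := (hG.par x hx).symm.trans hxy
    exact ⟨c • x, C.K_smul hc hx, hsmul x hx c hc⟩

end HCone

/-! ### Linearity of the lift -/

/-- The Mazur–Ulam theorem for norms given as functions: a surjective map fixing `0` and preserving
the distances of two homogeneous norms is linear. -/
lemma exists_linearEquiv_of_norm_preserving {V V' : Type*} [AddCommGroup V] [Module ℝ V]
    [AddCommGroup V'] [Module ℝ V'] (N : AddGroupNorm V) (N' : AddGroupNorm V')
    (hN : ∀ (c : ℝ) x, N (c • x) = |c| * N x) (hN' : ∀ (c : ℝ) x, N' (c • x) = |c| * N' x)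
    {f : V → V'} (hf : Function.Surjective f) (h0 : f 0 = 0)
    (hiso : ∀ x y, N' (f x - f y) = N (x - y)) : ∃ g : V ≃ₗ[ℝ] V', ∀ x, g x = f x := by
  let i1 : NormedAddCommGroup V := N.toNormedAddCommGroup
  let i2 : NormedAddCommGroup V' := N'.toNormedAddCommGroup
  let : NormedSpace ℝ V := { norm_smul_le := fun c x => (hN c x).le }
  let : NormedSpace ℝ V' := { norm_smul_le := fun c x => (hN' c x).le }
  have hi : Isometry f := Isometry.of_dist_eq fun x y => by
    rw [dist_eq_norm, dist_eq_norm]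
    exact hiso x y
  let F : V ≃ᵢ V' := IsometryEquiv.mk (Equiv.ofBijective f ⟨hi.injective, hf⟩) hi
  exact ⟨(F.toRealLinearIsometryEquivOfMapZero h0).toLinearEquiv, fun x => rfl⟩

namespace HCone

variable {V V' : Type*} [AddCommGroup V] [Module ℝ V] [AddCommGroup V'] [Module ℝ V']
variable {C : HCone V} {C' : HCone V'} {T : V → V'} {u x y z e e₁ e₂ : V} {e' e₁' e₂' : V'}
  {G : V → V'}

lemma eventually_mem (hx : x ∈ C.K) (w : V) : ∀ᶠ ε : ℝ in 𝓝[>] 0, x + ε • w ∈ C.K := by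
  obtain ⟨δ, hδ, h⟩ := exists_sub_mem hx (-w)
  filter_upwards [Ioo_mem_nhdsGT hδ] with ε hε
  have h1 := C.K_add (C.K_smul (c := ε / δ) (div_pos hε.1 hδ) h)
    (C.smul_mem (c := 1 - ε / δ) (by rw [sub_nonneg, div_le_one hδ]; exact hε.2.le) (C.sub hx))
  convert h1 using 1
  match_scalars <;> field_simp <;> ring

/-- `M(Z/·)` is continuous at `u ∈ K` along segments. -/
lemma tendsto_M (hu : u ∈ C.K) (Z Y : V) :
    Tendsto (fun ε : ℝ => C.M Z (u + ε • Y)) (𝓝[>] 0) (𝓝 (C.M Z u)) := by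
  rw [tendsto_order]
  constructor
  · intro l hl
    obtain ⟨l', h1, h2⟩ := exists_between hl
    have hk : (l' - l) • u ∈ C.K := C.K_smul (by linarith) hu
    filter_upwards [eventually_mem hu Y, eventually_mem hk (-(l • Y))] with ε m1 m2
    by_contra hle
    push Not at hle
    rw [M_le_iff m1] at hle
    have : C.M Z u ≤ l' := by
      rw [M_le_iff hu]
      convert C.add_mem (C.sub m2) hle using 1
      module
    linarith
  · intro l hl
    obtain ⟨l', h1, h2⟩ := exists_between hl
    have hk : l' • u - Z ∈ C.K := by
      have := C.K_add (C.K_smul (c := l' - C.M Z u) (by linarith) hu) (M_spec (x := Z) hu)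
      convert this using 1
      module
    filter_upwards [eventually_mem hu Y, eventually_mem hk (l' • Y)] with ε m1 m2
    refine lt_of_le_of_lt ?_ h2
    rw [M_le_iff m1]
    convert C.sub m2 using 1
    module

/-- The Finsler seminorm of the Hilbert metric at `u`, on the vector space containing the cone. It
vanishes exactly on the multiples of `u`. -/
def N (C : HCone V) (u Z : V) : ℝ := C.M Z u + C.M (-Z) u

lemma E_expand {X Y : V} {ε : ℝ} (hε : 0 < ε) (hX : u + ε • X ∈ C.K) (hY : u + ε • Y ∈ C.K) :
    C.E (u + ε • X) (u + ε • Y) =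
      (1 + ε * C.M (X - Y) (u + ε • Y)) * (1 + ε * C.M (Y - X) (u + ε • X)) := by
  have key : ∀ X Y : V, u + ε • Y ∈ C.K →
      C.M (u + ε • X) (u + ε • Y) = 1 + ε * C.M (X - Y) (u + ε • Y) := by
    intro X Y hY
    have h1 := M_smul (x := X - Y) hε one_pos hY
    rw [one_smul, div_one] at h1
    rw [← h1, ← M_add_self hY]
    congr 1
    module
  rw [E, key X Y hY, key Y X hX]

/-- The seminorm `N` is the infinitesimal form of the Hilbert metric. -/
lemma tendsto_E (hu : u ∈ C.K) (X Y : V) :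
    Tendsto (fun ε : ℝ => (C.E (u + ε • X) (u + ε • Y) - 1) / ε) (𝓝[>] 0) (𝓝 (C.N u (X - Y))) := by
  have h1 := tendsto_M (C := C) hu (X - Y) Y
  have h2 := tendsto_M (C := C) hu (Y - X) X
  have h3 : Tendsto (fun ε : ℝ => ε) (𝓝[>] 0) (𝓝 0) := tendsto_id.mono_left nhdsWithin_le_nhds
  have h4 := (h1.add h2).add (h3.mul (h1.mul h2))
  rw [zero_mul, add_zero] at h4
  rw [N, neg_sub]
  refine h4.congr' ?_
  filter_upwards [eventually_mem hu X, eventually_mem hu Y, self_mem_nhdsWithin] with ε mX mY hε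
  have hε : 0 < ε := hε
  rw [E_expand hε mX mY]
  field_simp
  ring

lemma M_add_le (hu : u ∈ C.K) (X Y : V) : C.M (X + Y) u ≤ C.M X u + C.M Y u := by
  rw [M_le_iff hu]
  convert C.add_mem (M_spec (x := X) hu) (M_spec (x := Y) hu) using 1
  module

lemma M_zero (hu : u ∈ C.K) : C.M 0 u = 0 := by
  apply M_eq hu
  rw [zero_smul, sub_zero]
  exact ⟨C.zero_mem, C.zero_notMem⟩

lemma N_zero (hu : u ∈ C.K) : C.N u 0 = 0 := by rw [N, neg_zero, M_zero hu, add_zero]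

lemma N_neg (X : V) : C.N u (-X) = C.N u X := by rw [N, N, neg_neg, add_comm]

lemma N_add_le (hu : u ∈ C.K) (X Y : V) : C.N u (X + Y) ≤ C.N u X + C.N u Y := by
  have h1 := M_add_le hu X Y
  have h2 := M_add_le hu (-X) (-Y)
  rw [← neg_add] at h2
  unfold N
  linarith

lemma N_nonneg (hu : u ∈ C.K) (X : V) : 0 ≤ C.N u X := by
  have := M_add_le hu X (-X)
  rwa [add_neg_cancel, M_zero hu] at this

lemma N_smul (hu : u ∈ C.K) (c : ℝ) (X : V) : C.N u (c • X) = |c| * C.N u X := by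
  have key : ∀ c : ℝ, 0 < c → C.N u (c • X) = c * C.N u X := by
    intro c hc
    have h1 := M_smul (x := X) hc one_pos hu
    have h2 := M_smul (x := -X) hc one_pos hu
    rw [one_smul, div_one] at h1 h2
    rw [N, N, ← smul_neg, h1, h2, mul_add]
  rcases lt_trichotomy c 0 with hc | rfl | hc
  · rw [abs_of_neg hc, ← key (-c) (by linarith), neg_smul, N_neg]
  · rw [zero_smul, N_zero hu, abs_zero, zero_mul]
  · rw [abs_of_pos hc, key c hc]

lemma eq_smul_of_N_eq_zero (hu : u ∈ C.K) {X : V} (h : C.N u X = 0) : ∃ r : ℝ, X = r • u := by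
  refine ⟨C.M X u, ?_⟩
  have h1 := M_spec (x := X) hu
  have h2 := M_spec (x := -X) hu
  rw [show C.M (-X) u = - C.M X u by unfold N at h; linarith] at h2
  have := C.pointed h1 (by convert h2 using 1; module)
  exact (sub_eq_zero.1 this).symm

/-- The sum of the seminorms at two distinct points `e₁ + e₂` and `e₁ + 2 • e₂` of the line, which
is a norm since the two kernels meet in `0`. -/
def lineNorm (h : C.Line e₁ e₂) : AddGroupNorm V where
  toFun X := C.N ((1 : ℝ) • e₁ + (1 : ℝ) • e₂) X + C.N ((1 : ℝ) • e₁ + (2 : ℝ) • e₂) X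
  map_zero' := by
    rw [N_zero (h.mem one_pos one_pos), N_zero (h.mem one_pos two_pos), add_zero]
  add_le' X Y := by
    have h1 := N_add_le (h.mem one_pos one_pos) X Y
    have h2 := N_add_le (h.mem one_pos two_pos) X Y
    linarith
  neg' X := by rw [N_neg, N_neg]
  eq_zero_of_map_eq_zero' X hX := by
    have h1 := N_nonneg (h.mem one_pos one_pos) X
    have h2 := N_nonneg (h.mem one_pos two_pos) X
    obtain ⟨r, hr⟩ := eq_smul_of_N_eq_zero (h.mem one_pos one_pos)
      (show C.N ((1 : ℝ) • e₁ + (1 : ℝ) • e₂) X = 0 by linarith)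
    obtain ⟨s, hs⟩ := eq_smul_of_N_eq_zero (h.mem one_pos two_pos)
      (show C.N ((1 : ℝ) • e₁ + (2 : ℝ) • e₂) X = 0 by linarith)
    obtain ⟨a, b⟩ := h.indep (p := r - s) (q := r - 2 * s) (by
      rw [← sub_self X]
      nth_rw 1 [hr]
      rw [hs]
      module)
    rw [hr, show r = 0 by linarith, zero_smul]

lemma lineNorm_smul (h : C.Line e₁ e₂) (c : ℝ) (X : V) :
    lineNorm h (c • X) = |c| * lineNorm h X := by
  change C.N _ _ + C.N _ _ = _ * (C.N _ _ + C.N _ _)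
  rw [N_smul (h.mem one_pos one_pos), N_smul (h.mem one_pos two_pos), mul_add]

/-- A lift is the restriction of a linear isomorphism: it extends to `f` on the whole space by
`f X = G (a u + X) - a u'` with `u = e₁ + e₂` and `u' = e₁' + e₂'`, for large `a`. The extension is
affine along `u`, so it preserves the seminorm at each point `p • e₁ + q • e₂` with `p, q ≥ 1`,
and Mazur–Ulam applies to `lineNorm`. -/
lemma Lift.exists_linearEquiv (hG : Lift C C' e₁ e₂ e₁' e₂' G) (h : C.Line e₁ e₂)
    (h' : C'.Line e₁' e₂') : ∃ g : V ≃ₗ[ℝ] V', ∀ x ∈ C.K, g x = G x := by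
  choose a ha haK using C.unit h.add
  let f : V → V' := fun X => G (a X • (e₁ + e₂) + X) - a X • (e₁' + e₂')
  have hadd : ∀ x ∈ C.K, ∀ t : ℝ, 0 ≤ t → G (x + t • (e₁ + e₂)) = G x + t • (e₁' + e₂') := by
    intro x hx t ht
    rw [smul_add, hG.add x hx t t ht ht, smul_add]
  have hf : ∀ (X : V) (b : ℝ), b • (e₁ + e₂) + X ∈ C.K →
      G (b • (e₁ + e₂) + X) = b • (e₁' + e₂') + f X := by
    intro X b hb
    rcases le_total b (a X) with hle | hle
    · have := hadd _ hb (a X - b) (by linarith)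
      rw [show b • (e₁ + e₂) + X + (a X - b) • (e₁ + e₂) = a X • (e₁ + e₂) + X by module] at this
      simp only [f]
      rw [this]
      module
    · have := hadd _ (haK X) (b - a X) (by linarith)
      rw [show a X • (e₁ + e₂) + X + (b - a X) • (e₁ + e₂) = b • (e₁ + e₂) + X by module] at this
      simp only [f]
      rw [this]
      module
  have hfK : ∀ x ∈ C.K, f x = G x := by
    intro x hx
    have := hf x 0 (by rwa [zero_smul, zero_add])
    rw [zero_smul, zero_add, zero_smul, zero_add] at this
    exact this.symm
  have hf0 : f 0 = 0 := by
    have h1 := hf 0 1 (by rw [one_smul, add_zero]; exact h.add)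
    have h2 := hG.line 1 1 one_pos one_pos
    rw [one_smul, one_smul, one_smul, one_smul] at h2
    rw [one_smul, one_smul, add_zero, h2] at h1
    exact left_eq_add.1 h1
  have hsurj : Function.Surjective f := by
    intro Y
    obtain ⟨b, hb, hbK⟩ := C'.unit h'.add Y
    obtain ⟨x, hx, hxb⟩ := hG.surj _ hbK
    refine ⟨x - b • (e₁ + e₂), ?_⟩
    have := hf (x - b • (e₁ + e₂)) b (by rwa [add_sub_cancel])
    rw [add_sub_cancel, hxb] at this
    exact (add_left_cancel this).symm
  have hexp : ∀ (X : V) (p q ε : ℝ), 1 ≤ p → 1 ≤ q → 0 < ε → e₁ + e₂ + ε • X ∈ C.K →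
      G (p • e₁ + q • e₂ + ε • X) = p • e₁' + q • e₂' + ε • f X := by
    intro X p q ε hp hq hε hK
    have h1 : ε⁻¹ • (e₁ + e₂) + X ∈ C.K := by
      convert C.K_smul (c := ε⁻¹) (by positivity) hK using 1
      match_scalars <;> field_simp
    have h2 := hG.smul _ h1 ε hε
    have h3 := hG.add _ (C.K_smul hε h1) (p - 1) (q - 1) (by linarith) (by linarith)
    rw [h2, hf X ε⁻¹ h1] at h3
    rw [show p • e₁ + q • e₂ + ε • X =
        ε • (ε⁻¹ • (e₁ + e₂) + X) + ((p - 1) • e₁ + (q - 1) • e₂) by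
      match_scalars <;> field_simp <;> ring, h3]
    match_scalars <;> field_simp <;> ring
  -- comparing the infinitesimal expansions of the two metrics at points of the line
  have hN : ∀ (p q : ℝ), 1 ≤ p → 1 ≤ q → ∀ X Y : V,
      C'.N (p • e₁' + q • e₂') (f X - f Y) = C.N (p • e₁ + q • e₂) (X - Y) := by
    intro p q hp hq X Y
    have hw := h.mem (show 0 < p by linarith) (show 0 < q by linarith)
    have hw' := h'.mem (show 0 < p by linarith) (show 0 < q by linarith)
    refine tendsto_nhds_unique (tendsto_E hw' (f X) (f Y)) ((tendsto_E hw X Y).congr' ?_)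
    filter_upwards [eventually_mem h.add X, eventually_mem h.add Y, eventually_mem hw X,
      eventually_mem hw Y, self_mem_nhdsWithin] with ε m1 m2 m3 m4 hε
    rw [← hexp X p q ε hp hq hε m1, ← hexp Y p q ε hp hq hε m2, hG.iso _ m3 _ m4]
  obtain ⟨g, hg⟩ := exists_linearEquiv_of_norm_preserving (lineNorm h) (lineNorm h')
    (lineNorm_smul h) (lineNorm_smul h') hsurj hf0 (fun X Y => by
      change C'.N _ _ + C'.N _ _ = C.N _ _ + C.N _ _
      rw [hN 1 1 le_rfl le_rfl, hN 1 2 le_rfl one_le_two])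
  exact ⟨g, fun x hx => by rw [hg, hfK x hx]⟩

/-- An isometry of the Hilbert geometries of two cones, the first of which has a line with extreme
ends, is induced by a linear isomorphism. -/
theorem HIso.exists_linearEquiv (hT : HIso C C' T) (h : C.Line e₁ e₂) (hex₁ : C.Extr e₁)
    (hex₂ : C.Extr e₂) : ∃ g : V ≃ₗ[ℝ] V', ∀ x ∈ C.K, Par (T x) (g x) := by
  obtain ⟨e₁', e₂', G, h', hG, hpar⟩ := hT.exists_Lift h hex₁ hex₂
  obtain ⟨g, hg⟩ := hG.exists_linearEquiv h h'
  exact ⟨g, fun x hx => by rw [hg x hx]; exact hpar x hx⟩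

end HCone

/-! ### The cone over a convex domain -/

section ConeOver

variable {F : Type*} [NormedAddCommGroup F] [NormedSpace ℝ F] {Ω Ω' : Set F} {x y α : F}

/-- The open cone over `Ω × {1}`. -/
def coneOver (Ω : Set F) : Set (F × ℝ) := {v | 0 < v.2 ∧ v.2⁻¹ • v.1 ∈ Ω}

lemma isOpen_coneOver (hop : IsOpen Ω) : IsOpen (coneOver Ω) := by
  have hc : ContinuousOn (fun v : F × ℝ => v.2⁻¹ • v.1) {v | 0 < v.2} := by
    intro v hv
    exact ((continuousAt_snd.inv₀ (ne_of_gt hv)).smul continuousAt_fst).continuousWithinAt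
  exact hc.isOpen_inter_preimage (isOpen_lt continuous_const continuous_snd) hop

lemma coneOver_smul {c : ℝ} (hc : 0 < c) {v : F × ℝ} (hv : v ∈ coneOver Ω) :
    c • v ∈ coneOver Ω := by
  refine ⟨mul_pos hc hv.1, ?_⟩
  have h1 : (c • v).2⁻¹ • (c • v).1 = v.2⁻¹ • v.1 := by
    have := hv.1.ne'
    simp only [Prod.smul_snd, Prod.smul_fst, smul_eq_mul, smul_smul]
    congr 1
    field_simp
  rw [h1]
  exact hv.2

lemma coneOver_add (hcv : Convex ℝ Ω) {v w : F × ℝ} (hv : v ∈ coneOver Ω) (hw : w ∈ coneOver Ω) :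
    v + w ∈ coneOver Ω := by
  have h1 := hv.1
  have h2 := hw.1
  refine ⟨add_pos h1 h2, ?_⟩
  have := hcv hv.2 hw.2 (a := v.2 / (v.2 + w.2)) (b := w.2 / (v.2 + w.2)) (by positivity)
    (by positivity) (by field_simp)
  convert this using 1
  simp only [Prod.snd_add, Prod.fst_add]
  match_scalars <;> field_simp

lemma norm_le_of_mem_closure {R : ℝ} (hR : ∀ p ∈ Ω, ‖p‖ ≤ R) {v : F × ℝ}
    (hv : v ∈ closure (coneOver Ω)) : 0 ≤ v.2 ∧ ‖v.1‖ ≤ R * v.2 := by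
  have hcl : IsClosed {v : F × ℝ | 0 ≤ v.2 ∧ ‖v.1‖ ≤ R * v.2} :=
    (isClosed_le continuous_const continuous_snd).inter
      (isClosed_le continuous_fst.norm (continuous_const.mul continuous_snd))
  refine closure_minimal (fun v hv => ?_) hcl hv
  have h1 := hv.1
  refine ⟨h1.le, ?_⟩
  have := hR _ hv.2
  rw [norm_smul, norm_inv, Real.norm_of_nonneg h1.le, inv_mul_le_iff₀ h1] at this
  linarith

/-- The cone over a convex domain, with its closure. -/
def hconeOver (Ω : Set F) (hne : Ω.Nonempty) (hop : IsOpen Ω) (hbd : Bornology.IsBounded Ω)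
    (hcv : Convex ℝ Ω) : HCone (F × ℝ) where
  K := coneOver Ω
  P := closure (coneOver Ω)
  sub h := subset_closure h
  zero_mem := by
    obtain ⟨ω, hω⟩ := hne
    have h1 : Tendsto (fun t : ℝ => t • ((ω, 1) : F × ℝ)) (𝓝[>] 0) (𝓝 ((0 : ℝ) • ((ω, 1) : F × ℝ))) :=
      ((continuous_id.smul continuous_const).tendsto 0).mono_left nhdsWithin_le_nhds
    rw [zero_smul] at h1
    refine mem_closure_of_tendsto h1 ?_
    filter_upwards [self_mem_nhdsWithin] with t ht
    exact coneOver_smul ht ⟨one_pos, by simpa using hω⟩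
  add_mem hx hy := map_mem_closure₂ continuous_add hx hy fun _ ha _ hb => coneOver_add hcv ha hb
  smul_mem := by
    intro c x hc hx
    rcases hc.lt_or_eq with hc | rfl
    · exact map_mem_closure (continuous_const_smul c) hx fun _ hv => coneOver_smul hc hv
    · have h1 : Tendsto (fun t : ℝ => t • x) (𝓝[>] 0) (𝓝 ((0 : ℝ) • x)) :=
        ((continuous_id.smul continuous_const).tendsto 0).mono_left nhdsWithin_le_nhds
      refine isClosed_closure.mem_of_tendsto h1 ?_
      filter_upwards [self_mem_nhdsWithin] with t ht
      exact map_mem_closure (continuous_const_smul t) hx fun _ hv => coneOver_smul ht hv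
  K_smul hc hx := coneOver_smul hc hx
  K_add := by
    intro x y hx hy
    have h1 : x + y ∈ coneOver Ω + closure (coneOver Ω) := add_mem_add hx hy
    rw [(isOpen_coneOver hop).add_closure] at h1
    obtain ⟨a, ha, b, hb, hab⟩ := h1
    rw [← hab]
    exact coneOver_add hcv ha hb
  unit := by
    intro x hx y
    have h1 : Tendsto (fun t : ℝ => x + t • y) (𝓝[>] 0) (𝓝 (x + (0 : ℝ) • y)) :=
      ((continuous_const.add (continuous_id.smul continuous_const)).tendsto 0).mono_left
        nhdsWithin_le_nhds
    rw [zero_smul, add_zero] at h1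
    obtain ⟨t, h2, ht⟩ := ((h1.eventually ((isOpen_coneOver hop).mem_nhds hx)).and
      self_mem_nhdsWithin).exists
    have ht : 0 < t := ht
    refine ⟨t⁻¹, inv_pos.2 ht, ?_⟩
    have := coneOver_smul (inv_pos.2 ht) h2
    rwa [smul_add, inv_smul_smul₀ ht.ne'] at this
  closed := by
    intro x y h
    have h1 : Tendsto (fun t : ℝ => x + t • y) (𝓝[>] 0) (𝓝 (x + (0 : ℝ) • y)) :=
      ((continuous_const.add (continuous_id.smul continuous_const)).tendsto 0).mono_left
        nhdsWithin_le_nhds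
    rw [zero_smul, add_zero] at h1
    refine isClosed_closure.mem_of_tendsto h1 ?_
    filter_upwards [self_mem_nhdsWithin] with t ht
    exact h t ht
  pointed := by
    intro x hx hx'
    obtain ⟨R, hR⟩ := hbd.exists_norm_le
    obtain ⟨h1, h2⟩ := norm_le_of_mem_closure hR hx
    obtain ⟨h3, h4⟩ := norm_le_of_mem_closure hR hx'
    have h5 : x.2 = 0 := le_antisymm (by simpa using h3) h1
    rw [h5, mul_zero, norm_le_zero_iff] at h2
    exact Prod.ext h2 h5
  zero_notMem h := lt_irrefl _ h.1

variable (hne : Ω.Nonempty) (hop : IsOpen Ω) (hbd : Bornology.IsBounded Ω) (hcv : Convex ℝ Ω)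

lemma mem_hconeOver : ((x, 1) : F × ℝ) ∈ (hconeOver Ω hne hop hbd hcv).K ↔ x ∈ Ω := by
  change (0 : ℝ) < 1 ∧ (1 : ℝ)⁻¹ • x ∈ Ω ↔ _
  simp

lemma par_normalize {v : F × ℝ} (hv : 0 < v.2) : Par v (v.2⁻¹ • v.1, 1) :=
  ⟨v.2⁻¹, by positivity, by ext <;> simp [hv.ne']⟩

lemma snd_pos_of_mem {v : F × ℝ} (hv : v ∈ (hconeOver Ω hne hop hbd hcv).P) (h0 : v ≠ 0) :
    0 < v.2 := by
  obtain ⟨R, hR⟩ := hbd.exists_norm_le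
  obtain ⟨h1, h2⟩ := norm_le_of_mem_closure hR hv
  refine lt_of_le_of_ne h1 fun h3 => h0 ?_
  rw [← h3, mul_zero, norm_le_zero_iff] at h2
  exact Prod.ext h2 h3.symm

lemma mem_closure_of_mem {v : F × ℝ} (hv : v ∈ (hconeOver Ω hne hop hbd hcv).P) (h0 : 0 < v.2) :
    v.2⁻¹ • v.1 ∈ closure Ω := by
  have h1 : ContinuousAt (fun v : F × ℝ => v.2⁻¹ • v.1) v :=
    (continuousAt_snd.inv₀ h0.ne').smul continuousAt_fst
  exact h1.continuousWithinAt.mem_closure hv fun w hw => hw.2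

lemma mem_frontier_of_mem_B {v : F × ℝ} (hv : v ∈ (hconeOver Ω hne hop hbd hcv).B) (h0 : 0 < v.2) :
    v.2⁻¹ • v.1 ∈ frontier Ω := by
  rw [hop.frontier_eq]
  exact ⟨mem_closure_of_mem hne hop hbd hcv hv.1 h0, fun h => hv.2 ⟨h0, h⟩⟩

lemma mem_B_of_mem_frontier (hα : α ∈ frontier Ω) :
    ((α, 1) : F × ℝ) ∈ (hconeOver Ω hne hop hbd hcv).B := by
  rw [hop.frontier_eq] at hα
  refine ⟨?_, fun h => hα.2 ((mem_hconeOver hne hop hbd hcv).1 h)⟩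
  refine map_mem_closure (f := fun q : F => ((q, 1) : F × ℝ)) (by fun_prop) hα.1 fun q hq => ?_
  exact (mem_hconeOver hne hop hbd hcv).2 hq

/-! ### The Hilbert metric in terms of the cone -/

/-- The gauge between the points `(y, 1)` and `(x, 1)` is the ratio of distances to the boundary
point `α` of the line through them lying beyond `x`. -/
lemma M_eq_ratio (hx : x ∈ Ω) (hy : y ∈ Ω) (hα : α ∈ frontier Ω)
    (hcol : Collinear ℝ ({α, x, y} : Set F)) (hd : dist α x < dist α y) :
    (hconeOver Ω hne hop hbd hcv).M (y, 1) (x, 1) = dist α y / dist α x := by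
  have hxy : x ≠ y := by rintro rfl; exact lt_irrefl _ hd
  have hmem : α ∈ line[ℝ, x, y] :=
    hcol.mem_affineSpan_of_mem_of_ne (by simp) (by simp) (by simp) hxy
  obtain ⟨ρ, rfl⟩ := mem_affineSpan_pair_iff_exists_lineMap_eq.1 hmem
  have hD : 0 < dist x y := dist_pos.2 hxy
  have hρΩ : AffineMap.lineMap x y ρ ∉ Ω := by
    rw [hop.frontier_eq] at hα
    exact hα.2
  have hρ : ρ < 0 := by
    by_contra h0
    push Not at h0
    rcases le_or_gt ρ 1 with h1 | h1
    · exact hρΩ (hcv.lineMap_mem hx hy ⟨h0, h1⟩)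
    · rw [dist_lineMap_left, dist_lineMap_right, Real.norm_of_nonneg h0,
        Real.norm_of_nonpos (by linarith)] at hd
      nlinarith
  rw [dist_lineMap_left, dist_lineMap_right, Real.norm_of_nonpos hρ.le,
    Real.norm_of_nonneg (by linarith), mul_div_mul_right _ _ hD.ne']
  apply HCone.M_eq ((mem_hconeOver hne hop hbd hcv).2 hx)
  have h1 := HCone.smul_mem_B (c := (-ρ)⁻¹) (by rw [inv_pos]; linarith)
    (mem_B_of_mem_frontier hne hop hbd hcv hα)
  convert h1 using 1
  have hρ' := hρ.ne
  ext
  · simp only [AffineMap.lineMap_apply_module, Prod.fst_sub, Prod.smul_fst]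
    match_scalars <;> field_simp
  · simp only [Prod.snd_sub, Prod.smul_snd, smul_eq_mul]
    field_simp
    ring

/-- The line through `x` and `y` meets the boundary beyond `x`. -/
lemma exists_frontier (hne : Ω.Nonempty) (hop : IsOpen Ω) (hbd : Bornology.IsBounded Ω)
    (hcv : Convex ℝ Ω) (hx : x ∈ Ω) (hxy : x ≠ y) :
    ∃ α ∈ frontier Ω, Collinear ℝ ({α, x, y} : Set F) ∧ dist α x < dist α y := by
  have hB := HCone.M_mem_B (x := (y, 1)) ((mem_hconeOver hne hop hbd hcv).2 hx)
  set m := (hconeOver Ω hne hop hbd hcv).M (y, 1) (x, 1)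
  have h0 : m • ((x, 1) : F × ℝ) - (y, 1) ≠ 0 := by
    intro h
    have h2 := congrArg Prod.snd h
    have h1 := congrArg Prod.fst h
    simp at h1 h2
    rw [show m = 1 by linarith, one_smul, sub_eq_zero] at h1
    exact hxy h1
  have hp := snd_pos_of_mem hne hop hbd hcv hB.1 h0
  have hf := mem_frontier_of_mem_B hne hop hbd hcv hB hp
  simp only [Prod.snd_sub, Prod.fst_sub, Prod.smul_fst, Prod.smul_snd, smul_eq_mul, mul_one]
    at hp hf
  have hα : (m - 1)⁻¹ • (m • x - y) = AffineMap.lineMap x y (-(m - 1)⁻¹) := by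
    rw [AffineMap.lineMap_apply_module]
    have := hp.ne'
    match_scalars <;> field_simp <;> ring
  rw [hα] at hf
  have hr : 0 < (m - 1)⁻¹ := inv_pos.2 hp
  refine ⟨_, hf, ?_, ?_⟩
  · exact collinear_insert_of_mem_affineSpan_pair (AffineMap.lineMap_mem_affineSpan_pair _ _ _)
  · rw [dist_lineMap_left, dist_lineMap_right, Real.norm_of_nonpos (by linarith),
      Real.norm_of_nonneg (by linarith)]
    have := dist_pos.2 hxy
    nlinarith

/-- Extreme points of the closed domain give extreme directions of the cone. -/
lemma extr_of_extremePoint {v : F × ℝ} (h0 : 0 < v.2)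
    (hv : v.2⁻¹ • v.1 ∈ extremePoints ℝ (closure Ω)) : (hconeOver Ω hne hop hbd hcv).Extr v := by
  intro a b ha hb hab
  by_cases ha0 : a = 0
  · exact ⟨0, by rw [ha0, zero_smul]⟩
  by_cases hb0 : b = 0
  · exact ⟨1, by rw [← hab, hb0, add_zero, one_smul]⟩
  have pa := snd_pos_of_mem hne hop hbd hcv ha ha0
  have pb := snd_pos_of_mem hne hop hbd hcv hb hb0
  have ca := mem_closure_of_mem hne hop hbd hcv ha pa
  have cb := mem_closure_of_mem hne hop hbd hcv hb pb
  subst hab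
  simp only [Prod.snd_add, Prod.fst_add] at *
  have := hv.2 ca cb ⟨a.2 / (a.2 + b.2), b.2 / (a.2 + b.2), by positivity, by positivity,
    by field_simp, by match_scalars <;> field_simp⟩
  refine ⟨a.2 / (a.2 + b.2), ?_⟩
  ext
  · simp only [Prod.smul_fst, Prod.fst_add]
    rw [div_eq_mul_inv, mul_smul, ← this, smul_inv_smul₀ pa.ne']
  · simp only [Prod.smul_snd, Prod.snd_add, smul_eq_mul]
    field_simp

end ConeOver

section Euclidean

variable {n : ℕ} {Ω Ω' : Set (Euc n)} {x y : Euc n}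

lemma hilbertDist_eq (hne : Ω.Nonempty) (hop : IsOpen Ω) (hbd : Bornology.IsBounded Ω)
    (hcv : Convex ℝ Ω) (hx : x ∈ Ω) (hy : y ∈ Ω) :
    hilbertDist Ω x y = Real.log ((hconeOver Ω hne hop hbd hcv).E (x, 1) (y, 1)) := by
  by_cases hxy : x = y
  · subst hxy
    rw [HCone.E_self ((mem_hconeOver hne hop hbd hcv).2 hx), Real.log_one, hilbertDist, dif_neg]
    rintro ⟨p, _, _, _, _, h, _⟩
    exact lt_irrefl _ h
  · have hex : ∃ p : Euc n × Euc n, IsHilbertPair Ω x y p.1 p.2 := by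
      obtain ⟨α, h1, h2, h3⟩ := exists_frontier hne hop hbd hcv hx hxy
      obtain ⟨β, h4, h5, h6⟩ := exists_frontier hne hop hbd hcv hy (Ne.symm hxy)
      exact ⟨(α, β), h1, h4, h2, by rwa [Set.pair_comm x y], h3, h6⟩
    obtain ⟨h1, h2, h3, h4, h5, h6⟩ := hex.choose_spec
    rw [hilbertDist, dif_pos hex, HCone.E, mul_comm (HCone.M _ _ _),
      M_eq_ratio hne hop hbd hcv hx hy h1 h3 h5,
      M_eq_ratio hne hop hbd hcv hy hx h2 (by rwa [Set.pair_comm y x]) h6]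

/-- The map `τ` in homogeneous coordinates: `v` represents the point `v.2⁻¹ • v.1`. -/
def homog {F : Type*} [NormedAddCommGroup F] [NormedSpace ℝ F] (τ : F → F) (v : F × ℝ) : F × ℝ :=
  (τ (v.2⁻¹ • v.1), 1)

lemma IsHilbertIsometry.hiso {τ : Euc n → Euc n} (hτ : IsHilbertIsometry Ω Ω' τ)
    (hne : Ω.Nonempty) (hop : IsOpen Ω) (hbd : Bornology.IsBounded Ω) (hcv : Convex ℝ Ω)
    (hne' : Ω'.Nonempty) (hop' : IsOpen Ω') (hbd' : Bornology.IsBounded Ω') (hcv' : Convex ℝ Ω') :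
    HCone.HIso (hconeOver Ω hne hop hbd hcv) (hconeOver Ω' hne' hop' hbd' hcv') (homog τ) := by
  obtain ⟨h1, h2, h3⟩ := hτ
  refine ⟨fun v hv => (mem_hconeOver hne' hop' hbd' hcv').2 (h1 hv.2), ?_, ?_⟩
  · intro v hv w hw
    have e1 := h3 _ hv.2 _ hw.2
    rw [hilbertDist_eq hne hop hbd hcv hv.2 hw.2,
      hilbertDist_eq hne' hop' hbd' hcv' (h1 hv.2) (h1 hw.2)] at e1
    have e2 := Real.log_injOn_pos
      (HCone.E_pos ((mem_hconeOver hne' hop' hbd' hcv').2 (h1 hv.2))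
        ((mem_hconeOver hne' hop' hbd' hcv').2 (h1 hw.2)))
      (HCone.E_pos ((mem_hconeOver hne hop hbd hcv).2 hv.2)
        ((mem_hconeOver hne hop hbd hcv).2 hw.2)) e1
    rw [homog, homog, e2]
    exact HCone.E_par hv hw (par_normalize hv.1) (par_normalize hw.1)
  · intro v hv
    obtain ⟨x, hx, hxv⟩ := h2 hv.2
    refine ⟨(x, 1), (mem_hconeOver hne hop hbd hcv).2 hx, ?_⟩
    have : homog τ (x, 1) = (v.2⁻¹ • v.1, 1) := by simp [homog, hxv]
    rw [this]
    exact (par_normalize hv.1).symm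

/-- The two ends of an extreme line, as vectors of the cone over `Ω`. -/
lemma IsExtremeLine.exists_line {L : Set (Euc n)} (hL : IsExtremeLine Ω L)
    (hne : Ω.Nonempty) (hop : IsOpen Ω) (hbd : Bornology.IsBounded Ω) (hcv : Convex ℝ Ω) :
    ∃ v w, (hconeOver Ω hne hop hbd hcv).Line v w ∧ (hconeOver Ω hne hop hbd hcv).Extr v ∧
      (hconeOver Ω hne hop hbd hcv).Extr w := by
  obtain ⟨⟨⟨z, hzL⟩, p, d, hd, hLd⟩, hext⟩ := hL
  obtain ⟨⟨t₀, ht₀⟩, hz⟩ : z ∈ {x | ∃ t : ℝ, x = p + t • d} ∩ Ω := hLd ▸ hzL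
  have hzK : ((z, 1) : Euc n × ℝ) ∈ (hconeOver Ω hne hop hbd hcv).K :=
    (mem_hconeOver hne hop hbd hcv).2 hz
  -- a boundary vector whose direction projects to the line `L` is extreme
  have key : ∀ v ∈ (hconeOver Ω hne hop hbd hcv).B, v ≠ 0 →
      (∃ a b : ℝ, v = a • ((z, 1) : Euc n × ℝ) + b • (d, 0)) →
      (hconeOver Ω hne hop hbd hcv).Extr v := by
    rintro v hv hv0 ⟨a, b, rfl⟩
    have hp := snd_pos_of_mem hne hop hbd hcv hv.1 hv0
    have hf := mem_frontier_of_mem_B hne hop hbd hcv hv hp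
    refine extr_of_extremePoint hne hop hbd hcv hp (hext _ ⟨?_, hf⟩)
    have hcl : closure (openSegment ℝ z _) ⊆ closure L := closure_mono (t := L) (?_ :
      openSegment ℝ z ((a • ((z, 1) : Euc n × ℝ) + b • (d, 0)).2⁻¹ •
        (a • ((z, 1) : Euc n × ℝ) + b • (d, 0)).1) ⊆ L)
    · exact hcl (segment_subset_closure_openSegment (right_mem_segment ℝ _ _))
    · intro w hw
      rw [hLd]
      constructor
      · obtain ⟨r, s, hr, hs, hrs, rfl⟩ := hw
        simp only [Prod.snd_add, Prod.fst_add, Prod.smul_fst, Prod.smul_snd, smul_eq_mul, mul_one,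
          mul_zero, add_zero] at hp ⊢
        refine ⟨t₀ + s * (a⁻¹ * b), ?_⟩
        rw [show r = 1 - s by linarith, ht₀]
        match_scalars <;> field_simp <;> ring
      · have := hcv.openSegment_interior_closure_subset_interior (hop.interior_eq.symm ▸ hz)
          (frontier_subset_closure hf) hw
        rwa [hop.interior_eq] at this
  have hB := HCone.M_mem_B (x := ((d, 0) : Euc n × ℝ)) hzK
  set m := (hconeOver Ω hne hop hbd hcv).M (d, 0) (z, 1)
  have hv0 : m • ((z, 1) : Euc n × ℝ) - (d, 0) ≠ 0 := by
    intro h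
    have h2 := congrArg Prod.snd h
    have h1 := congrArg Prod.fst h
    simp at h1 h2
    rw [h2, zero_smul, zero_sub, neg_eq_zero] at h1
    exact hd h1
  obtain ⟨k, hk, hl⟩ := HCone.exists_line_through hzK hB hv0
  refine ⟨_, _, hl, key _ hB hv0 ⟨m, -1, by module⟩, key _ hl.right hl.right_ne_zero
    ⟨k - m, 1, by module⟩⟩

/-- The identification of `ℝⁿ × ℝ` with `ℝⁿ⁺¹` matching `x ↦ (x, 1)` with `chart`. -/
def snocEquiv (n : ℕ) : (Euc n × ℝ) ≃ₗ[ℝ] (Fin (n + 1) → ℝ) where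
  toFun v := Fin.snoc (fun i => v.1 i) v.2
  invFun f := (WithLp.toLp 2 fun i => f i.castSucc, f (Fin.last n))
  map_add' v w := by
    ext i
    refine Fin.lastCases ?_ (fun i => ?_) i <;> simp
  map_smul' c v := by
    ext i
    refine Fin.lastCases ?_ (fun i => ?_) i <;> simp
  left_inv v := by ext <;> simp
  right_inv f := by
    ext i
    refine Fin.lastCases ?_ (fun i => ?_) i <;> simp

end Euclidean

end HilbertGeometry

/-- If `τ : Ω → Ω'` is an isometry of Hilbert geometries and `Ω`
contains an extreme line, then `τ` is (the restriction of) a projective transformation. -/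
theorem stmt_2 {n : ℕ} (Ω Ω' : Set (Euc n))
    (hne : Ω.Nonempty) (hop : IsOpen Ω) (hbd : Bornology.IsBounded Ω) (hcv : Convex ℝ Ω)
    (hne' : Ω'.Nonempty) (hop' : IsOpen Ω') (hbd' : Bornology.IsBounded Ω')
    (hcv' : Convex ℝ Ω') (τ : Euc n → Euc n) (hτ : IsHilbertIsometry Ω Ω' τ)
    (hL : ∃ L : Set (Euc n), IsExtremeLine Ω L) :
    IsProjectiveOn Ω τ := by
  obtain ⟨L, hL⟩ := hL
  obtain ⟨v, w, hl, hv, hw⟩ := hL.exists_line hne hop hbd hcv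
  obtain ⟨g, hg⟩ := (hτ.hiso hne hop hbd hcv hne' hop' hbd' hcv').exists_linearEquiv hl hv hw
  refine ⟨(snocEquiv n).symm ≪≫ₗ g ≪≫ₗ snocEquiv n, fun x hx => ?_⟩
  obtain ⟨c, hc, hcx⟩ := (hg (x, 1) ((mem_hconeOver hne hop hbd hcv).2 hx)).symm
  have h1 : homog τ (x, 1) = (τ x, 1) := by simp [homog]
  rw [h1] at hcx
  have h2 : ∀ y : Euc n, (Fin.snoc (fun i => y i) 1 : Fin (n + 1) → ℝ) = snocEquiv n (y, 1) :=
    fun y => rfl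
  unfold chart projMap
  rw [Projectivization.map_mk, Projectivization.mk_eq_mk_iff']
  refine ⟨c, ?_⟩
  rw [h2, h2, hcx]
  simp
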